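/- Let w be a nontrivial word in the free group F_s on s generators, with reduced word length ℓ(w). For every n ≥ 2 there exists a finite set S(n) of primes such that for every prime p ∉ S(n), every r ≥ 1, every k ≥ 1, and every g ∈ SL_n(R), where R is the ring of k-truncated Witt vectors over the field with q = p^r elements (so R ≅ ℤ_q/𝔪_q^k, and R ≅ ℤ/p^kℤ when r = 1), the following inequality of real numbers holds: #{(g_1,…,g_s) ∈ SL_n(R)^s : w(g_1,…,g_s) = g} ≤ |SL_n(R)|^{s − 1/(2·10^{17}·ℓ(w)^9)}. -/

import Mathlib

/-!
Write `R` for the ring of truncated Witt vectors, `Q = |R| = q ^ k`, `G = SLₙ(R)`, `F` for the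
number of solutions of `w = g` and `ℓ` for the length of `w`. It suffices to prove
`F ^ 2 * C ≤ |G| ^ (2 s)` with `C ≥ Q ^ (2 ε n²)`, because `|G| ≤ Q ^ (n²)`
(`le_rpow_of_sq_mul_le`). The saving `C` comes from two different arguments.

*Large rank, `n ≥ 1000 ℓ²`* (`card_fiber_sq_le`). Pairing two solutions of `w = g` gives a solution
of the reduced word `w(x) w(y)⁻¹ = 1` of length `N = 2 ℓ`. Given such a solution and row vectors
`v₁, …, v_m`, follow their images under the partial products of the word: this is a closed path in
`(R ^ n) ^ m`, and the path together with the tuple satisfies linear relations `Rel`. Reading the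
coordinates `ρ` of the path as elements `u ρ` of `(R ^ m) ^ N`, group the solutions of `Rel` by the
submodule `M ⊆ (R ^ m) ^ N` which is the range of the linear map `Phi` attached to `u`. For a given
`u` the tuples form a torsor under `(ker Phi) ^ n`, and `|ker Phi| = Q ^ (n s) / |M|`. Conversely
each `u ρ` lies in a submodule `ZM` determined by `M`, and `|ZM| ≤ |M|` because the word is
reduced: leading coefficients of elements of `ZM` occur as leading coefficients in `M`
(`card_le_of_lead`, `card_ZM_le`). The powers of `|M|` cancel, so the number of solutions is at most
`Q ^ (n² s)` times the number of submodules, which is at most `Q ^ ((2 ℓ m)²)` since `R` is a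
principal ideal ring. Dividing by the `Q ^ (n m)` choices of the `v_j` gives a saving of
`n m - 4 ℓ² m² - 4 ℓ` in the exponent, and `m ≈ n / (8 ℓ²)` makes this quadratic in `n`.

*Small rank, `n < 1000 ℓ²`* (`card_fiber_sq_mul_le`). After homogenising with determinants,
an entry of `w(x) - g` becomes a polynomial function `disc` of degree less than `D = 2 n ℓ + 1`
on tuples of all matrices. A polynomial of degree less than `D` over a chain ring whose constant
term is a unit has its zeros in at most `D` residue classes modulo `π ^ (b + 1)` when `b D < k`
(`card_zeros_le`), and averaging over lines through a point where `disc` is a unit bounds the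
zeros in several variables (`card_zeros_mul_units_le`). Such a point exists as soon as some entry
of `w(γ) - 1` is a unit for one tuple `γ`: then `w(γ) - g` and `1 - g` cannot both have a non-unit
at that entry. A tuple `γ` of integer matrices with `w(γ) ≠ 1` is found by ping-pong with
transvections (`exists_int_tuple`); the primes dividing a nonzero entry of `w(γ) - 1` and the
primes below an explicit bound are the excluded ones.
-/

namespace WordFiber

theorem card_range_mul_card_ker {R X Y : Type*} [CommRing R] [AddCommGroup X] [Module R X]
    [AddCommGroup Y] [Module R Y] (f : X →ₗ[R] Y) :
    Nat.card (LinearMap.range f) * Nat.card (LinearMap.ker f) = Nat.card X := by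
  rw [Submodule.card_eq_card_quotient_mul_card (LinearMap.ker f),
    Nat.card_congr f.quotKerEquivRange.toEquiv, mul_comm]

/-! ### Sizes of submodules through leading coefficients -/

section Lead

variable {R A : Type*} [CommRing R] [AddCommGroup A] [Module R A] {N : ℕ}

/-- The elements of `Z` whose coordinates before position `p` vanish. -/
def tail (Z : Submodule R (Fin N → A)) (p : ℕ) : Submodule R (Fin N → A) where
  carrier := {r | r ∈ Z ∧ ∀ q : Fin N, q.val < p → r q = 0}
  add_mem' := by
    rintro a b ⟨ha, ha'⟩ ⟨hb, hb'⟩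
    exact ⟨Z.add_mem ha hb, fun q hq => by simp [ha' q hq, hb' q hq]⟩
  zero_mem' := ⟨Z.zero_mem, fun q _ => rfl⟩
  smul_mem' := by
    rintro c a ⟨ha, ha'⟩
    exact ⟨Z.smul_mem c ha, fun q hq => by simp [ha' q hq]⟩

/-- The coordinate at position `p`, on the elements of `Z` vanishing before `p`. -/
def lead (Z : Submodule R (Fin N → A)) (p : Fin N) : tail Z p.val →ₗ[R] A :=
  (LinearMap.proj p).comp (tail Z p.val).subtype

theorem card_ker_lead (Z : Submodule R (Fin N → A)) (p : Fin N) :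
    Nat.card (LinearMap.ker (lead Z p)) = Nat.card (tail Z (p.val + 1)) := by
  refine Nat.card_congr ⟨fun x => ⟨x.1.1, x.1.2.1, fun q hq => ?_⟩,
    fun x => ⟨⟨x.1, x.2.1, fun q hq => x.2.2 q (by omega)⟩, x.2.2 p (by omega)⟩,
    fun x => rfl, fun x => rfl⟩
  rcases Nat.lt_succ_iff_lt_or_eq.1 hq with h | h
  · exact x.1.2.2 q h
  · obtain rfl : q = p := Fin.ext h
    exact x.2

/-- If every leading coefficient of an element of `Z` is also the leading coefficient, at the same
position, of an element of `M`, then `M` is at least as large as `Z`. -/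
theorem card_le_of_lead [Finite A] (Z M : Submodule R (Fin N → A))
    (h : ∀ p : Fin N, ∀ r ∈ Z, (∀ q : Fin N, q < p → r q = 0) →
      ∃ f ∈ M, (∀ q : Fin N, q < p → f q = 0) ∧ f p = r p) :
    Nat.card Z ≤ Nat.card M := by
  have key : ∀ d p : ℕ, p + d = N → Nat.card (tail Z p) ≤ Nat.card (tail M p) := by
    intro d
    induction d with
    | zero =>
      intro p hp
      have : Subsingleton (tail Z p) := by
        refine ⟨fun a b => Subtype.ext (funext fun q => ?_)⟩
        rw [a.2.2 q (by omega), b.2.2 q (by omega)]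
      rw [Nat.card_of_subsingleton (0 : tail Z p)]
      exact Nat.card_pos
    | succ d ih =>
      intro p hp
      have hpN : p < N := by omega
      have h1 := card_range_mul_card_ker (lead Z ⟨p, hpN⟩)
      have h2 := card_range_mul_card_ker (lead M ⟨p, hpN⟩)
      rw [card_ker_lead] at h1 h2
      rw [← h1, ← h2]
      refine Nat.mul_le_mul ?_ (ih (p + 1) (by omega))
      refine Nat.card_le_card_of_injective
        (Set.inclusion (s := (LinearMap.range (lead Z ⟨p, hpN⟩) : Set A))
          (t := (LinearMap.range (lead M ⟨p, hpN⟩) : Set A)) ?_) (Set.inclusion_injective _)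
      rintro _ ⟨r, rfl⟩
      obtain ⟨f, hf, hf0, hfp⟩ := h ⟨p, hpN⟩ r.1 r.2.1 (fun q hq => r.2.2 q hq)
      exact ⟨⟨f, hf, fun q hq => hf0 q hq⟩, hfp⟩
  have hz : ∀ Y : Submodule R (Fin N → A), Nat.card (tail Y 0) = Nat.card Y := fun Y =>
    Nat.card_congr ⟨fun x => ⟨x.1, x.2.1⟩, fun x => ⟨x.1, x.2, fun q hq => by omega⟩,
      fun x => rfl, fun x => rfl⟩
  simpa [hz] using key N 0 (by omega)

end Lead

/-! ### Closed paths and the tuples that move along them -/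

section Pairs

variable {R β : Type*} [CommRing R] {N n m : ℕ} [NeZero N]

/-- The position, on a cyclic path with positions `Fin N`, at which the generator used in step `t`
is applied: a step with sign `false` uses the inverse of the generator, hence traverses it from
`t + 1` to `t`. The sum `t + 1` is cyclic. -/
def src (sg : Fin N → Bool) (t : Fin N) : Fin N := if sg t then t else t + 1

/-- The position reached from `src sg t` by applying the generator used in step `t`. -/
def dst (sg : Fin N → Bool) (t : Fin N) : Fin N := if sg t then t + 1 else t

/-- Applies the functionals `c i` to a path in `(R ^ n) ^ m`: the value at step `t` is that of
`c (b t)` on the point at position `src sg t`. Here `u ρ` is the `ρ`-th coordinate of the path, and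
`b t` is the generator used in step `t`. -/
def Phi (b : Fin N → β) (sg : Fin N → Bool) (u : Fin n → Fin N → Fin m → R) :
    (β → Fin n → R) →ₗ[R] (Fin N → Fin m → R) where
  toFun c := fun t j => ∑ ρ, c (b t) ρ * u ρ (src sg t) j
  map_add' c d := by
    funext t j
    simp [add_mul, Finset.sum_add_distrib]
  map_smul' a c := by
    funext t j
    simp [mul_assoc, Finset.mul_sum]

/-- Each generator `i`, acting by the matrix whose columns are `g i ρ`, moves the path `u` from
position `src sg t` to position `dst sg t` in every step `t` with `b t = i`. -/
def Rel (b : Fin N → β) (sg : Fin N → Bool) (g : β → Fin n → Fin n → R)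
    (u : Fin n → Fin N → Fin m → R) : Prop :=
  ∀ ρ, Phi b sg u (fun i => g i ρ) = fun t => u ρ (dst sg t)

open Classical in
/-- Keeps only the values at the steps which use the generator `i`. -/
noncomputable def mask (b : Fin N → β) (i : β) : (Fin N → Fin m → R) →ₗ[R] (Fin N → Fin m → R) where
  toFun f := fun t => if b t = i then f t else 0
  map_add' f g := by
    funext t
    by_cases h : b t = i <;> simp [h]
  map_smul' a f := by
    funext t
    by_cases h : b t = i <;> simp [h]

/-- The `r` for which, for every generator `i`, the restrictions of `r ∘ src sg` and of
`r ∘ dst sg` to the steps using `i` belong to `M`. Coordinates of a path satisfying `Rel` lie in it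
when `M` is the range of `Phi`. -/
noncomputable def ZM (b : Fin N → β) (sg : Fin N → Bool) (M : Submodule R (Fin N → Fin m → R)) :
    Submodule R (Fin N → Fin m → R) where
  carrier := {r | ∀ i, mask b i (r ∘ src sg) ∈ M ∧ mask b i (r ∘ dst sg) ∈ M}
  add_mem' := by
    intro r r' h h' i
    have h1 := M.add_mem (h i).1 (h' i).1
    have h2 := M.add_mem (h i).2 (h' i).2
    rw [← map_add] at h1 h2
    exact ⟨h1, h2⟩
  zero_mem' := fun i => by
    have h0 := M.zero_mem
    rw [← map_zero (mask b i)] at h0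
    exact ⟨h0, h0⟩
  smul_mem' := by
    intro a r h i
    have h1 := M.smul_mem a (h i).1
    have h2 := M.smul_mem a (h i).2
    rw [← map_smul] at h1 h2
    exact ⟨h1, h2⟩

/-- At position `p` the leading coefficient of `r` is read off from `mask b (b p) (r ∘ src sg)` or
from `mask b (b p) (r ∘ dst sg)`, according to the sign of step `p`. An earlier step with the same
generator only involves positions before `p`: for consecutive steps this is the reducedness `hred`. -/
theorem card_ZM_le [Finite R] (b : Fin N → β) (sg : Fin N → Bool)
    (hred : ∀ t t' : Fin N, t'.val = t.val + 1 → b t = b t' → sg t = sg t')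
    (M : Submodule R (Fin N → Fin m → R)) :
    Nat.card (ZM b sg M) ≤ Nat.card M := by
  refine card_le_of_lead _ _ fun p r hr hr0 => ?_
  have hsucc : ∀ q : Fin N, q < p → (q + 1).val = q.val + 1 := by
    intro q hq
    have h2 : 2 ≤ N := by have := p.2; have : q.val < p.val := hq; omega
    rw [Fin.val_add, Fin.val_one', Nat.mod_eq_of_lt (a := 1) (by omega), Nat.mod_eq_of_lt]
    have : q.val < p.val := hq
    omega
  have hstep : ∀ q : Fin N, q < p → b q = b p → sg q ≠ sg p → r (q + 1) = 0 := by
    intro q hq hb hs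
    apply hr0
    have h1 := hsucc q hq
    have h3 : q.val < p.val := hq
    have : (q + 1).val ≠ p.val := by
      intro h
      exact hs (hred q p (by omega) hb)
    show (q + 1).val < p.val
    omega
  cases hp : sg p with
  | true =>
    refine ⟨_, (hr (b p)).1, fun q hq => ?_, by simp [mask, src, hp]⟩
    by_cases hb : b q = b p
    · cases hs : sg q with
      | true => simpa [mask, hb, src, hs] using hr0 q hq
      | false => simpa [mask, hb, src, hs] using hstep q hq hb (by simp [hs, hp])
    · simp [mask, hb]
  | false =>
    refine ⟨_, (hr (b p)).2, fun q hq => ?_, by simp [mask, dst, hp]⟩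
    by_cases hb : b q = b p
    · cases hs : sg q with
      | false => simpa [mask, hb, dst, hs] using hr0 q hq
      | true => simpa [mask, hb, dst, hs] using hstep q hq hb (by simp [hs, hp])
    · simp [mask, hb]

/-- The two restrictions are `Phi` of a coordinate functional and of a column of `g i`. -/
theorem mem_ZM_of_rel (b : Fin N → β) (sg : Fin N → Bool) (g : β → Fin n → Fin n → R)
    (u : Fin n → Fin N → Fin m → R) (h : Rel b sg g u) (ρ : Fin n) :
    u ρ ∈ ZM b sg (LinearMap.range (Phi b sg u)) := by
  classical
  refine fun i => ⟨⟨fun i' => if i' = i then Pi.single ρ 1 else 0, ?_⟩,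
    ⟨fun i' => if i' = i then g i ρ else 0, ?_⟩⟩
  · funext t j
    by_cases hb : b t = i
    · simp [Phi, mask, hb, Pi.single_apply]
    · simp [Phi, mask, hb]
  · funext t j
    by_cases hb : b t = i
    · have := congrFun (congrFun (h ρ) t) j
      simp only [Phi, LinearMap.coe_mk, AddHom.coe_mk, hb] at this
      simp [Phi, mask, hb, this]
    · simp [Phi, mask, hb]

/-- For a given path the admissible tuples form a coset of `(ker Phi) ^ n`, or there are none. -/
theorem card_rel_left [Finite R] [Finite β] (b : Fin N → β) (sg : Fin N → Bool)
    (u : Fin n → Fin N → Fin m → R) :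
    Nat.card {g : β → Fin n → Fin n → R // Rel b sg g u} *
      Nat.card (LinearMap.range (Phi b sg u)) ^ n ≤ Nat.card R ^ (n * n * Nat.card β) := by
  have h1 := card_range_mul_card_ker (Phi b sg u)
  have h2 : Nat.card {g : β → Fin n → Fin n → R // Rel b sg g u} ≤
      Nat.card (LinearMap.ker (Phi b sg u)) ^ n := by
    by_cases hne : Nonempty {g : β → Fin n → Fin n → R // Rel b sg g u}
    · obtain ⟨g0, h0⟩ := hne
      have : Nat.card (LinearMap.ker (Phi b sg u)) ^ n =
          Nat.card (Fin n → LinearMap.ker (Phi b sg u)) := by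
        rw [Nat.card_fun, Nat.card_fin]
      rw [this]
      refine Nat.card_le_card_of_injective
        (fun g ρ => ⟨(fun i => g.1 i ρ) - (fun i => g0 i ρ), ?_⟩) ?_
      · rw [LinearMap.mem_ker, map_sub, g.2 ρ, h0 ρ, sub_self]
      · intro g g' hgg
        apply Subtype.ext
        funext i ρ σ
        have := congrArg Subtype.val (congrFun hgg ρ)
        have := congrFun (congrFun this i) σ
        simpa using this
    · rw [not_nonempty_iff] at hne
      rw [Nat.card_of_isEmpty]
      exact Nat.zero_le _
  calc _ ≤ Nat.card (LinearMap.ker (Phi b sg u)) ^ n * Nat.card (LinearMap.range (Phi b sg u)) ^ n :=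
        Nat.mul_le_mul_right _ h2
    _ = Nat.card (β → Fin n → R) ^ n := by rw [← h1, mul_pow, mul_comm]
    _ = _ := by
      cases nonempty_fintype β
      rw [Nat.card_fun, Nat.card_fun, Nat.card_fin, ← pow_mul, ← pow_mul]
      congr 1
      ring

/-- Group the pairs by the range `M` of `Phi`: the number of tuples for each path carries a factor
`|M| ^ (-n)`, and there are at most `|M| ^ n` paths. -/
theorem card_rel_le [Finite R] [Finite β] (b : Fin N → β) (sg : Fin N → Bool)
    (hred : ∀ t t' : Fin N, t'.val = t.val + 1 → b t = b t' → sg t = sg t') :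
    Nat.card {x : (β → Fin n → Fin n → R) × (Fin n → Fin N → Fin m → R) // Rel b sg x.1 x.2} ≤
      Nat.card (Submodule R (Fin N → Fin m → R)) * Nat.card R ^ (n * n * Nat.card β) := by
  classical
  let X := {x : (β → Fin n → Fin n → R) × (Fin n → Fin N → Fin m → R) // Rel b sg x.1 x.2}
  let F : X → Submodule R (Fin N → Fin m → R) := fun x => LinearMap.range (Phi b sg x.1.2)
  have : Fintype (Submodule R (Fin N → Fin m → R)) := Fintype.ofFinite _
  have hM : ∀ M, Nat.card {x : X // F x = M} ≤ Nat.card R ^ (n * n * Nat.card β) := by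
    intro M
    let U := {u : Fin n → Fin N → Fin m → R //
      LinearMap.range (Phi b sg u) = M ∧ ∃ g, Rel b sg g u}
    have : Fintype U := Fintype.ofFinite _
    have e : {x : X // F x = M} ≃ Σ u : U, {g // Rel b sg g u.1} :=
      ⟨fun x => ⟨⟨x.1.1.2, x.2, x.1.1.1, x.1.2⟩, ⟨x.1.1.1, x.1.2⟩⟩,
       fun y => ⟨⟨(y.2.1, y.1.1), y.2.2⟩, y.1.2.1⟩, fun x => rfl, fun y => rfl⟩
    have hU : Nat.card U ≤ Nat.card M ^ n := by
      calc Nat.card U ≤ Nat.card (Fin n → ZM b sg M) := by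
            refine Nat.card_le_card_of_injective (fun u ρ => ⟨u.1 ρ, ?_⟩) ?_
            · obtain ⟨g, hg⟩ := u.2.2
              have := mem_ZM_of_rel b sg g u.1 hg ρ
              rwa [u.2.1] at this
            · intro u u' h
              apply Subtype.ext
              funext ρ
              exact congrArg Subtype.val (congrFun h ρ)
        _ = Nat.card (ZM b sg M) ^ n := by rw [Nat.card_fun, Nat.card_fin]
        _ ≤ _ := Nat.pow_le_pow_left (card_ZM_le b sg hred M) n
    have hpos : 0 < Nat.card M ^ n := pow_pos Nat.card_pos _
    refine Nat.le_of_mul_le_mul_right ?_ hpos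
    rw [Nat.card_congr e, Nat.card_sigma, Finset.sum_mul]
    calc _ ≤ ∑ u : U, Nat.card R ^ (n * n * Nat.card β) := by
          refine Finset.sum_le_sum fun u _ => ?_
          have := card_rel_left b sg u.1
          rwa [u.2.1] at this
      _ = Nat.card U * Nat.card R ^ (n * n * Nat.card β) := by
          simp
      _ ≤ Nat.card M ^ n * Nat.card R ^ (n * n * Nat.card β) := Nat.mul_le_mul_right _ hU
      _ = _ := mul_comm _ _
  rw [Nat.card_congr (Equiv.sigmaFiberEquiv F).symm, Nat.card_sigma]
  calc _ ≤ ∑ M : Submodule R (Fin N → Fin m → R), Nat.card R ^ (n * n * Nat.card β) :=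
        Finset.sum_le_sum fun M _ => hM M
    _ = _ := by simp

end Pairs

/-! ### Words over the special linear group -/

section Words

open Matrix

/-- A solution `g` of the word together with `m` row vectors gives a pair satisfying `Rel`: the path
of the vectors under the partial products of the word, which closes up because the word is `1`. -/
theorem card_word_eq_one_le {R β : Type*} [CommRing R] [Finite R] [Finite β] {n : ℕ} (m : ℕ)
    (L : List (β × Bool)) (hL : L ≠ []) (hred : FreeGroup.IsReduced L) :
    Nat.card {g : β → SpecialLinearGroup (Fin n) R // FreeGroup.lift g (FreeGroup.mk L) = 1} *
      Nat.card R ^ (n * m) ≤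
    Nat.card (Submodule R (Fin L.length → Fin m → R)) * Nat.card R ^ (n * n * Nat.card β) := by
  have hN : NeZero L.length := ⟨by simpa using hL⟩
  let b : Fin L.length → β := fun t => (L.get t).1
  let sg : Fin L.length → Bool := fun t => (L.get t).2
  have hred' : ∀ t t' : Fin L.length, t'.val = t.val + 1 → b t = b t' → sg t = sg t' := by
    intro t t' ht hb
    have h := List.isChain_iff_getElem.1 hred t.val (by have := t'.2; omega)
    obtain ⟨t', ht'⟩ := t'
    simp only at ht
    subst ht
    exact h hb
  refine le_trans ?_ (card_rel_le (R := R) (n := n) (m := m) b sg hred')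
  have hc : Nat.card R ^ (n * m) = Nat.card (Fin m → Fin n → R) := by
    rw [Nat.card_fun, Nat.card_fun, Nat.card_fin, Nat.card_fin, pow_mul]
  rw [hc, ← Nat.card_prod]
  let a : (β → SpecialLinearGroup (Fin n) R) → β × Bool → SpecialLinearGroup (Fin n) R :=
    fun g x => cond x.2 (g x.1) (g x.1)⁻¹
  let P : (β → SpecialLinearGroup (Fin n) R) → ℕ → SpecialLinearGroup (Fin n) R :=
    fun g t => ((L.map (a g)).take t).prod
  have hP0 : ∀ g, P g 0 = 1 := fun g => by simp [P]
  have hPs : ∀ g (t : Fin L.length), P g (t.val + 1) = P g t.val * a g (L.get t) := by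
    intro g t
    simp only [P]
    rw [List.prod_take_succ _ _ (by simp)]
    simp
  have hPc : ∀ g, FreeGroup.lift g (FreeGroup.mk L) = 1 → ∀ t : Fin L.length,
      P g (t + 1).val = P g t.val * a g (L.get t) := by
    intro g hg t
    rw [← hPs]
    by_cases ht : t.val + 1 < L.length
    · congr 1
      rw [Fin.val_add, Fin.val_one', Nat.mod_eq_of_lt (a := 1) (by omega), Nat.mod_eq_of_lt ht]
    · have hl : t.val + 1 = L.length := by have := t.2; omega
      have h0 : (t + 1).val = 0 := by
        rw [Fin.val_add, Fin.val_one', Nat.add_mod_mod, hl, Nat.mod_self]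
      rw [h0, hP0, hl]
      simp only [P]
      rw [List.take_of_length_le (by simp), ← hg, FreeGroup.lift_mk]
  refine Nat.card_le_card_of_injective
    (fun x => ⟨(fun i ρ σ => (x.1.1 i).1 σ ρ, fun ρ t j => (x.2 j ᵥ* (P x.1.1 t.val).1) ρ), ?_⟩) ?_
  · obtain ⟨⟨g, hg⟩, v⟩ := x
    have key : ∀ t, P g (src sg t).val * g (b t) = P g (dst sg t).val := by
      intro t
      have h := hPc g hg t
      cases hs : sg t with
      | true =>
        have : a g (L.get t) = g (b t) := by simp only [a]; rw [show (L.get t).2 = true from hs]; rfl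
        rw [this] at h
        simp [src, dst, hs, h]
      | false =>
        have : a g (L.get t) = (g (b t))⁻¹ := by
          simp only [a]; rw [show (L.get t).2 = false from hs]; rfl
        rw [this] at h
        simp [src, dst, hs, h]
    intro ρ
    funext t j
    have h2 : (v j ᵥ* (P g (src sg t).val).1) ᵥ* (g (b t)).1 = v j ᵥ* (P g (dst sg t).val).1 := by
      rw [Matrix.vecMul_vecMul, ← key]
      rfl
    have h3 := congrFun h2 ρ
    simp only [Phi, LinearMap.coe_mk, AddHom.coe_mk]
    rw [← h3]
    conv_rhs => rw [Matrix.vecMul, dotProduct]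
    exact Finset.sum_congr rfl fun σ _ => mul_comm _ _
  · rintro ⟨⟨g, hg⟩, v⟩ ⟨⟨g', hg'⟩, v'⟩ h
    have h1 := congrArg (fun x => x.1.1) h
    have h2 := congrArg (fun x => x.1.2) h
    simp only at h1 h2
    have e1 : g = g' := by
      funext i
      ext σ ρ
      exact congrFun (congrFun (congrFun h1 i) ρ) σ
    have e2 : v = v' := by
      funext j ρ
      have := congrFun (congrFun (congrFun h2 ρ) 0) j
      simpa [hP0] using this
    subst e1 e2
    rfl

theorem lift_sum {G β : Type*} [Group G] (g g' : β → G) (L : List (β × Bool)) :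
    FreeGroup.lift (Sum.elim g g') (FreeGroup.mk (L.map (Prod.map Sum.inl id) ++
      FreeGroup.invRev (L.map (Prod.map Sum.inr id)))) =
    FreeGroup.lift g (FreeGroup.mk L) * (FreeGroup.lift g' (FreeGroup.mk L))⁻¹ := by
  rw [← FreeGroup.mul_mk, ← FreeGroup.inv_mk, map_mul, map_inv]
  simp only [FreeGroup.lift_mk, List.map_map]
  rfl

/-- The word `w(x) w(y)⁻¹` in two disjoint sets of variables is reduced when `w` is. -/
theorem isReduced_double {β : Type*} (L : List (β × Bool)) (h : FreeGroup.IsReduced L) :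
    FreeGroup.IsReduced (L.map (Prod.map Sum.inl id) ++
      FreeGroup.invRev (L.map (Prod.map Sum.inr id)) : List ((β ⊕ β) × Bool)) := by
  have h1 : FreeGroup.IsReduced (L.map (Prod.map Sum.inl id) : List ((β ⊕ β) × Bool)) := by
    unfold FreeGroup.IsReduced at *
    rw [List.isChain_map]
    exact h.imp fun a b hab => by simpa using hab
  have h2 : FreeGroup.IsReduced (FreeGroup.invRev (L.map (Prod.map Sum.inr id)) :
      List ((β ⊕ β) × Bool)) := by
    unfold FreeGroup.IsReduced FreeGroup.invRev at *
    rw [List.isChain_reverse, List.isChain_map, List.isChain_map]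
    refine h.imp fun a b hab => ?_
    simp only [Prod.map_fst, Prod.map_snd, id, Sum.inr.injEq, Bool.not_inj_iff]
    intro e
    exact (hab e.symm).symm
  unfold FreeGroup.IsReduced at *
  refine List.IsChain.append h1 h2 ?_
  intro x hx y hy
  have hx' := List.mem_of_mem_getLast? hx
  have hy' := List.mem_of_mem_head? hy
  simp only [FreeGroup.invRev, List.mem_map, List.mem_reverse] at hx' hy'
  obtain ⟨x0, -, rfl⟩ := hx'
  obtain ⟨_, ⟨y0, -, rfl⟩, rfl⟩ := hy'
  simp

/-- Two elements of the same fibre of `w` solve `w(x) w(y)⁻¹ = 1`. -/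
theorem card_word_sq_le {R β : Type*} [CommRing R] [Finite R] [Finite β] {n : ℕ} (m : ℕ)
    (L : List (β × Bool)) (hL : L ≠ []) (hred : FreeGroup.IsReduced L)
    (h : SpecialLinearGroup (Fin n) R) :
    Nat.card {g : β → SpecialLinearGroup (Fin n) R // FreeGroup.lift g (FreeGroup.mk L) = h} ^ 2 *
      Nat.card R ^ (n * m) ≤
    Nat.card (Submodule R (Fin (2 * L.length) → Fin m → R)) *
      Nat.card R ^ (n * n * (2 * Nat.card β)) := by
  have key := card_word_eq_one_le (R := R) (n := n) m _ (by simpa [FreeGroup.invRev] using hL)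
    (isReduced_double L hred)
  rw [Nat.card_sum, ← two_mul, List.length_append, FreeGroup.invRev_length, List.length_map,
    List.length_map, ← two_mul] at key
  refine le_trans (Nat.mul_le_mul_right _ ?_) key
  rw [sq, ← Nat.card_prod]
  refine Nat.card_le_card_of_injective (fun x => ⟨Sum.elim x.1.1 x.2.1, ?_⟩) ?_
  · rw [lift_sum, x.1.2, x.2.2, mul_inv_cancel]
  · rintro ⟨⟨g, hg⟩, ⟨g', hg'⟩⟩ ⟨⟨k, hk⟩, ⟨k', hk'⟩⟩ e
    have e := congrArg Subtype.val e
    simp only at e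
    have e1 : g = k := funext fun i => congrFun e (Sum.inl i)
    have e2 : g' = k' := funext fun i => congrFun e (Sum.inr i)
    subst e1 e2
    rfl

end Words

/-! ### Counting submodules over a principal ideal ring -/

section Submodules

/-- A submodule of `R ^ d` over a principal ideal ring has `d` generators. -/
theorem exists_generators {R : Type*} [CommRing R] [IsPrincipalIdealRing R] (d : ℕ)
    (M : Submodule R (Fin d → R)) :
    ∃ v : Fin d → Fin d → R, Submodule.span R (Set.range v) = M := by
  induction d with
  | zero =>
    refine ⟨0, ?_⟩
    exact Subsingleton.elim _ _
  | succ d ih =>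
    let i0 : (Fin d → R) →ₗ[R] (Fin (d + 1) → R) :=
      { toFun := fun f => Fin.cons 0 f
        map_add' := fun f g => by
          funext i
          refine Fin.cases ?_ (fun j => ?_) i <;> simp
        map_smul' := fun c f => by
          funext i
          refine Fin.cases ?_ (fun j => ?_) i <;> simp }
    obtain ⟨v, hv⟩ := ih (M.comap i0)
    let I : Ideal R := M.map (LinearMap.proj 0)
    obtain ⟨a, ha⟩ := (IsPrincipalIdealRing.principal I).principal
    have haI : a ∈ I := by rw [ha]; exact Submodule.mem_span_singleton_self a
    obtain ⟨f, hf, hfa⟩ := haI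
    refine ⟨Fin.cons f (fun i => i0 (v i)), le_antisymm ?_ ?_⟩
    · rw [Submodule.span_le]
      rintro _ ⟨i, rfl⟩
      refine Fin.cases ?_ (fun j => ?_) i
      · simpa using hf
      · have : v j ∈ M.comap i0 := by rw [← hv]; exact Submodule.subset_span ⟨j, rfl⟩
        simpa using this
    · intro r hr
      have h0 : r 0 ∈ I := ⟨r, hr, rfl⟩
      rw [ha, Submodule.mem_span_singleton] at h0
      obtain ⟨c, hc⟩ := h0
      have hf0 : f 0 = a := hfa
      have hi : r - c • f = i0 (fun i => (r - c • f) i.succ) := by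
        funext i
        refine Fin.cases ?_ (fun j => ?_) i
        · simp [i0, hf0, ← hc]
        · simp [i0]
      have hmem : (fun i : Fin d => (r - c • f) i.succ) ∈ M.comap i0 := by
        rw [Submodule.mem_comap, ← hi]
        exact M.sub_mem hr (M.smul_mem c hf)
      rw [← hv] at hmem
      have h3 : r - c • f ∈ Submodule.span R (Set.range
          (Fin.cons f (fun i => i0 (v i)) : Fin (d + 1) → Fin (d + 1) → R)) := by
        rw [hi]
        have := Submodule.mem_map_of_mem (f := i0) hmem
        rw [Submodule.map_span] at this
        refine Submodule.span_mono ?_ this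
        rintro _ ⟨_, ⟨i, rfl⟩, rfl⟩
        exact ⟨i.succ, by simp⟩
      have h4 := Submodule.add_mem _ h3 (Submodule.smul_mem _ c (Submodule.subset_span ⟨0, rfl⟩))
      simpa using h4

theorem card_submodule_le {R : Type*} [CommRing R] [IsPrincipalIdealRing R] [Finite R] (d m : ℕ) :
    Nat.card (Submodule R (Fin d → Fin m → R)) ≤ Nat.card R ^ ((d * m) ^ 2) := by
  let e1 : (Fin d → Fin m → R) ≃ₗ[R] (Fin (d * m) → R) :=
    (LinearEquiv.curry R R (Fin d) (Fin m)).symm.trans (LinearEquiv.funCongrLeft R R finProdFinEquiv.symm)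
  rw [Nat.card_congr (Submodule.orderIsoMapComap e1).toEquiv]
  have : Nat.card R ^ ((d * m) ^ 2) = Nat.card (Fin (d * m) → Fin (d * m) → R) := by
    rw [Nat.card_fun, Nat.card_fun, Nat.card_fin, ← pow_mul, sq]
  rw [this]
  refine Nat.card_le_card_of_surjective (fun v => Submodule.span R (Set.range v)) ?_
  intro M
  exact exists_generators _ M

end Submodules

/-! ### The fibre bound for large rank -/

section Large

open Matrix

/-- Only the letters occurring in a word constrain its fibre. -/
theorem card_fiber_used {α : Type} {G : Type*} [Finite α] [Group G] [Finite G] (L : List (α × Bool)) (h : G) :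
    ∃ (β : Type) (_ : Finite β) (L' : List (β × Bool)),
      Nat.card β ≤ L.length ∧ Nat.card β ≤ Nat.card α ∧ L'.length = L.length ∧
      (FreeGroup.IsReduced L → FreeGroup.IsReduced L') ∧
      Nat.card {g : α → G // FreeGroup.lift g (FreeGroup.mk L) = h} ≤
        Nat.card {g : β → G // FreeGroup.lift g (FreeGroup.mk L') = h} *
          Nat.card G ^ (Nat.card α - Nat.card β) := by
  classical
  let p : α → Prop := fun a => a ∈ (L.map Prod.fst).toFinset
  have hlift : ∃ L' : List ({a // p a} × Bool), L'.map (Prod.map Subtype.val id) = L := by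
    refine ⟨L.attach.map fun x => (⟨x.1.1, ?_⟩, x.1.2), ?_⟩
    · simp only [p, List.mem_toFinset, List.mem_map]
      exact ⟨x.1, x.2, rfl⟩
    · rw [List.map_map]
      conv_rhs => rw [← List.attach_map_subtype_val L]
      rfl
  obtain ⟨L', hL'⟩ := hlift
  have hcard : Nat.card {a // p a} = (L.map Prod.fst).toFinset.card := by
    change Nat.card {a // a ∈ (L.map Prod.fst).toFinset} = _
    rw [Nat.card_eq_fintype_card, Fintype.card_coe]
  refine ⟨{a // p a}, inferInstance, L', ?_, ?_, ?_, ?_, ?_⟩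
  · rw [hcard]
    exact (List.toFinset_card_le _).trans (by simp)
  · exact Nat.card_le_card_of_injective _ Subtype.val_injective
  · rw [← hL']; simp
  · intro hr
    rw [← hL'] at hr
    unfold FreeGroup.IsReduced at *
    rw [List.isChain_map] at hr
    exact hr.imp fun _ _ hab e => hab (congrArg Subtype.val e)
  · have hc : Nat.card G ^ (Nat.card α - Nat.card {a // p a}) =
        Nat.card ({a // ¬ p a} → G) := by
      cases nonempty_fintype α
      rw [Nat.card_fun]
      congr 1
      simp only [Nat.card_eq_fintype_card]
      rw [Fintype.card_subtype_compl]
    rw [hc, ← Nat.card_prod]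
    refine Nat.card_le_card_of_injective
      (fun g => (⟨fun a => g.1 a.1, ?_⟩, fun a => g.1 a.1)) ?_
    · obtain ⟨g0, hg0⟩ := g
      refine Eq.trans ?_ hg0
      conv_rhs => rw [← hL']
      simp only [FreeGroup.lift_mk, List.map_map]
      rfl
    · rintro ⟨g, hg⟩ ⟨g', hg'⟩ e
      apply Subtype.ext
      funext a
      by_cases ha : p a
      · exact congrFun (congrArg (fun x => x.1.1) e) ⟨a, ha⟩
      · exact congrFun (congrArg (fun x => x.2) e) ⟨a, ha⟩

/-- Fibre bound with a free parameter `m`, useful for large rank. The hypothesis `hG` compares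
`Rⁿˣⁿ` with `SLₙ(R)` for each of the at most `ℓ` letters that occur in the word. -/
theorem card_fiber_sq_le {R : Type*} [CommRing R] [IsPrincipalIdealRing R] [Finite R] {n : ℕ}
    (s m : ℕ) (w : FreeGroup (Fin s)) (hw : w ≠ 1)
    (hG : Nat.card R ^ (n * n) ≤ Nat.card (SpecialLinearGroup (Fin n) R) * Nat.card R ^ 2)
    (h : SpecialLinearGroup (Fin n) R) :
    Nat.card {g : Fin s → SpecialLinearGroup (Fin n) R // FreeGroup.lift g w = h} ^ 2 *
      Nat.card R ^ (n * m) ≤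
    Nat.card (SpecialLinearGroup (Fin n) R) ^ (2 * s) *
      Nat.card R ^ (4 * w.norm ^ 2 * m ^ 2 + 4 * w.norm) := by
  obtain ⟨β, hβ, L, h1, h2, h3, h4, h5⟩ := card_fiber_used (G := SpecialLinearGroup (Fin n) R)
    w.toWord h
  have h4 := h4 FreeGroup.isReduced_toWord
  rw [FreeGroup.mk_toWord, Nat.card_fin] at h5
  rw [Nat.card_fin] at h2
  change _ ≤ w.norm at h1
  change _ = w.norm at h3
  have hL : L ≠ [] := by
    rintro rfl
    exact hw (FreeGroup.norm_eq_zero.1 h3.symm)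
  have h6 := card_word_sq_le m L hL h4 h
  have h7 := card_submodule_le (R := R) (2 * L.length) m
  rw [h3] at h6 h7
  set F := Nat.card {g : Fin s → SpecialLinearGroup (Fin n) R // FreeGroup.lift g w = h}
  set A := Nat.card {g : β → SpecialLinearGroup (Fin n) R // FreeGroup.lift g (FreeGroup.mk L) = h}
  set G := Nat.card (SpecialLinearGroup (Fin n) R)
  set Q := Nat.card R
  set B := Nat.card β
  have hQ : 0 < Q := Nat.card_pos
  calc F ^ 2 * Q ^ (n * m) ≤ (A * G ^ (s - B)) ^ 2 * Q ^ (n * m) :=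
        Nat.mul_le_mul_right _ (Nat.pow_le_pow_left h5 2)
    _ = (A ^ 2 * Q ^ (n * m)) * G ^ (2 * (s - B)) := by ring
    _ ≤ (Q ^ ((2 * w.norm * m) ^ 2) * Q ^ (n * n * (2 * B))) * G ^ (2 * (s - B)) :=
        Nat.mul_le_mul_right _ (h6.trans (Nat.mul_le_mul_right _ h7))
    _ ≤ (Q ^ ((2 * w.norm * m) ^ 2) * (G * Q ^ 2) ^ (2 * B)) * G ^ (2 * (s - B)) := by
        rw [pow_mul Q (n * n)]
        gcongr
    _ = G ^ (2 * B + 2 * (s - B)) * Q ^ (4 * w.norm ^ 2 * m ^ 2 + 4 * B) := by ring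
    _ ≤ _ := by
        rw [show 2 * B + 2 * (s - B) = 2 * s by omega]
        gcongr

end Large

/-! ### Zeros of polynomials over a chain ring -/

section SingleVariable

open Polynomial

/-- A polynomial with more prescribed zeros than its degree is killed by a power of `π`, as soon as
the differences of these zeros divide a fixed power of `π`. -/
theorem pow_mul_eq_zero_of_zeros {R : Type*} [CommRing R] [Nontrivial R] (π : R) (b : ℕ) (D : ℕ) :
    ∀ (T : Finset R) (f : R[X]), T.card = D → (f.natDegree < D ∨ f = 0) → (∀ t ∈ T, f.eval t = 0) →
      (∀ t ∈ T, ∀ t' ∈ T, t ≠ t' → (t - t') ∣ π ^ b) → C (π ^ (b * D)) * f = 0 := by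
  classical
  induction D with
  | zero =>
    intro T f _ hf _ _
    rcases hf with hf | hf
    · omega
    · simp [hf]
  | succ D ih =>
    intro T f hT hf hz hd
    by_cases hf0 : f = 0
    · simp [hf0]
    have hdeg : f.natDegree < D + 1 := hf.resolve_right hf0
    obtain ⟨a, ha⟩ : T.Nonempty := Finset.card_pos.1 (by omega)
    obtain ⟨g, hg⟩ := Polynomial.dvd_iff_isRoot.2 (hz a ha)
    have hgdeg : g.natDegree < D ∨ g = 0 := by
      by_cases hg0 : g = 0
      · exact Or.inr hg0
      · left
        have := (monic_X_sub_C a).natDegree_mul' hg0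
        rw [← hg, natDegree_X_sub_C] at this
        omega
    have key := ih (T.erase a) (C (π ^ b) * g) (by rw [Finset.card_erase_of_mem ha]; omega) ?_ ?_ ?_
    · have : C (π ^ (b * (D + 1))) * f = (X - C a) * (C (π ^ (b * D)) * (C (π ^ b) * g)) := by
        rw [hg, mul_add, pow_add, C_mul, mul_one]; ring
      rw [this, key, mul_zero]
    · rcases hgdeg with h | h
      · exact Or.inl ((natDegree_C_mul_le _ _).trans_lt h)
      · exact Or.inr (by simp [h])
    · intro t ht
      rw [Finset.mem_erase] at ht
      obtain ⟨c, hc⟩ := hd t ht.2 a ha ht.1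
      have h1 := hz t ht.2
      rw [hg] at h1
      simp only [eval_mul, eval_sub, eval_X, eval_C] at h1
      rw [eval_mul, eval_C, hc, mul_right_comm, h1, zero_mul]
    · intro t ht t' ht' hne
      exact hd t (Finset.mem_of_mem_erase ht) t' (Finset.mem_of_mem_erase ht') hne

/-- When the constant coefficient survives multiplication by `π ^ (b * D)`, the zeros of a polynomial
of degree less than `D` lie in at most `D` residue classes modulo `π ^ (b + 1)`: zeros in distinct
classes differ by a divisor of `π ^ b`, so `D` of them would kill `π ^ (b * D) * f`. -/
theorem card_zeros_le {R : Type*} [CommRing R] [Nontrivial R] [Finite R] (π : R) (b D : ℕ)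
    (hchain : ∀ x : R, x ∣ π ^ b ∨ π ^ (b + 1) ∣ x) (f : R[X]) (hf : f.natDegree < D)
    (h0 : π ^ (b * D) * f.coeff 0 ≠ 0) :
    Nat.card {t : R // f.eval t = 0} ≤ D * Nat.card {x : R // π ^ (b + 1) ∣ x} := by
  classical
  cases nonempty_fintype R
  let I := Ideal.span {π ^ (b + 1)}
  let Z : Finset R := Finset.univ.filter fun t => f.eval t = 0
  let q : R → R ⧸ I := Ideal.Quotient.mk I
  have hq : ∀ x y, q x = q y ↔ π ^ (b + 1) ∣ x - y := fun x y => by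
    rw [Ideal.Quotient.eq, Ideal.mem_span_singleton]
  have himg : (Z.image q).card ≤ D := by
    by_contra! hlt
    obtain ⟨U, hU, hUc⟩ := Finset.exists_subset_card_eq hlt.le
    have hsec : ∀ u : R ⧸ I, ∃ t, u ∈ U → t ∈ Z ∧ q t = u := by
      intro u
      by_cases hu : u ∈ U
      · obtain ⟨t, ht, e⟩ := Finset.mem_image.1 (hU hu)
        exact ⟨t, fun _ => ⟨ht, e⟩⟩
      · exact ⟨0, fun h => absurd h hu⟩
    choose σ hσ using hsec
    have hinj : Set.InjOn σ U := by
      intro u hu v hv e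
      rw [← (hσ u hu).2, ← (hσ v hv).2, e]
    have h := pow_mul_eq_zero_of_zeros π b D (U.image σ) f
      (by rw [Finset.card_image_of_injOn hinj, hUc]) (Or.inl hf) ?_ ?_
    · apply h0
      rw [← coeff_C_mul, h, coeff_zero]
    · intro t ht
      obtain ⟨u, hu, rfl⟩ := Finset.mem_image.1 ht
      exact (Finset.mem_filter.1 (hσ u hu).1).2
    · intro t ht t' ht' hne
      obtain ⟨u, hu, rfl⟩ := Finset.mem_image.1 ht
      obtain ⟨v, hv, rfl⟩ := Finset.mem_image.1 ht'
      refine (hchain _).resolve_right fun hdvd => hne ?_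
      have := (hq _ _).2 hdvd
      rw [(hσ u hu).2, (hσ v hv).2] at this
      rw [this]
  have hcard : Nat.card {t : R // f.eval t = 0} = Z.card := by
    rw [Nat.card_eq_fintype_card, Fintype.card_subtype]
  rw [hcard, Nat.card_eq_fintype_card, Fintype.card_subtype]
  refine (Finset.card_le_mul_card_image (f := q) Z _ ?_).trans (by
    rw [mul_comm]; exact Nat.mul_le_mul_right _ himg)
  intro u hu
  obtain ⟨t0, ht0, rfl⟩ := Finset.mem_image.1 hu
  refine Finset.card_le_card_of_injOn (fun t => t - t0) ?_ (fun x _ y _ e => sub_left_injective e)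
  intro t ht
  have ht := Finset.mem_filter.1 ht
  simpa using (hq _ _).1 ht.2

end SingleVariable

/-! ### Zeros of polynomial functions on a module -/

section SeveralVariables

open Polynomial

/-- Zeros of a function on a finite module which is polynomial along every line: average
`card_zeros_le` over the lines through a point `x₀` where the function is not too divisible. -/
theorem card_zeros_mul_units_le {R V : Type*} [CommRing R] [Nontrivial R] [Finite R]
    [AddCommGroup V] [Module R V] [Finite V] (π : R) (b D : ℕ)
    (hchain : ∀ x : R, x ∣ π ^ b ∨ π ^ (b + 1) ∣ x) (F : V → R) (x₀ : V)
    (hpoly : ∀ y, ∃ P : R[X], P.natDegree < D ∧ ∀ t, P.eval t = F (x₀ + t • y))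
    (h0 : π ^ (b * D) * F x₀ ≠ 0) :
    Nat.card {x : V // F x = 0} * Nat.card Rˣ ≤
      Nat.card V * (D * Nat.card {x : R // π ^ (b + 1) ∣ x}) := by
  classical
  cases nonempty_fintype R
  cases nonempty_fintype V
  have h1 : Nat.card {x : V // F x = 0} * Nat.card Rˣ ≤
      Nat.card (Σ y : V, {t : R // F (x₀ + t • y) = 0}) := by
    rw [← Nat.card_prod]
    refine Nat.card_le_card_of_injective
      (fun a => ⟨((a.2⁻¹ : Rˣ) : R) • (a.1.1 - x₀), ⟨(a.2 : R), ?_⟩⟩) ?_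
    · rw [smul_smul]
      simpa using a.1.2
    · rintro ⟨⟨x, hx⟩, u⟩ ⟨⟨x', hx'⟩, u'⟩ e
      have hu : u = u' := by
        have : ∀ a c : (Σ y : V, {t : R // F (x₀ + t • y) = 0}), a = c → a.2.1 = c.2.1 := by
          rintro a _ rfl; rfl
        exact Units.ext (this _ _ e)
      subst hu
      have h2 := congrArg Sigma.fst e
      have h3 := congrArg (fun z => (u : R) • z) h2
      simp only [smul_smul, Units.mul_inv, one_smul, sub_left_inj] at h3
      simp [h3]
  refine h1.trans ?_
  rw [Nat.card_sigma, Nat.card_eq_fintype_card (α := V), ← smul_eq_mul, ← Finset.card_univ,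
    ← Finset.sum_const]
  refine Finset.sum_le_sum fun y _ => ?_
  obtain ⟨P, hP, hPe⟩ := hpoly y
  have h2 := card_zeros_le π b D hchain P hP (by
    rw [coeff_zero_eq_eval_zero, hPe, zero_smul, add_zero]; exact h0)
  simpa only [hPe] using h2

end SeveralVariables

/-! ### Truncated Witt vectors as chain rings -/

section TruncatedRing

/-- A finite chain ring with residue field of size `q`: every element is a unit times a power of
`π`, the powers `1, π, …, π ^ (k - 1)` are nonzero and `π ^ k = 0`. The cardinalities of the ring
and of its ideals `(π ^ b)` are recorded as fields. -/
structure IsTruncated (R : Type*) [CommRing R] (π : R) (q k : ℕ) : Prop where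
  card : Nat.card R = q ^ k
  exists_unit : ∀ x : R, ∃ (u : Rˣ) (j : ℕ), x = u * π ^ j
  pow_ne : ∀ j < k, π ^ j ≠ 0
  card_dvd : ∀ b ≤ k, Nat.card {x : R // π ^ b ∣ x} ≤ q ^ (k - b)
  pos : 1 ≤ k
  two_le : 2 ≤ q
  pow_top : π ^ k = 0

namespace IsTruncated

variable {R : Type*} [CommRing R] {π : R} {q k : ℕ}

theorem chain (H : IsTruncated R π q k) (b : ℕ) (x : R) : x ∣ π ^ b ∨ π ^ (b + 1) ∣ x := by
  obtain ⟨u, j, rfl⟩ := H.exists_unit x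
  rcases Nat.lt_or_ge b j with h | h
  · exact Or.inr ((pow_dvd_pow π h).mul_left _)
  · left
    rw [Units.mul_left_dvd]
    exact pow_dvd_pow π h

theorem isUnit_or_dvd (H : IsTruncated R π q k) (x : R) : IsUnit x ∨ π ∣ x := by
  rcases H.chain 0 x with h | h
  · exact Or.inl (isUnit_of_dvd_one (by simpa using h))
  · exact Or.inr (by simpa using h)

theorem not_isUnit (H : IsTruncated R π q k) : ¬ IsUnit π := fun hu => by
  have := H.pow_ne 0 H.pos
  rw [pow_zero] at this
  have h2 : IsUnit (0 : R) := by rw [← H.pow_top]; exact hu.pow k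
  have h3 := isUnit_zero_iff.1 h2
  exact this h3.symm

theorem nontrivial (H : IsTruncated R π q k) : Nontrivial R :=
  ⟨⟨π ^ 0, 0, H.pow_ne 0 H.pos⟩⟩

theorem finite (H : IsTruncated R π q k) : Finite R :=
  Nat.finite_of_card_ne_zero (by rw [H.card]; have := H.two_le; positivity)

theorem card_le_units (H : IsTruncated R π q k) : q ^ k ≤ 2 * Nat.card Rˣ := by
  classical
  have := H.finite
  have := H.nontrivial
  have h1 : q ^ k ≤ Nat.card Rˣ + q ^ (k - 1) := by
    have h2 := H.card_dvd 1 H.pos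
    refine le_trans ?_ (Nat.add_le_add_left h2 _)
    rw [← H.card, ← Nat.card_sum]
    have hR : ∀ x : R, ¬ IsUnit x → π ^ 1 ∣ x := fun x hx => by
      simpa using (H.isUnit_or_dvd x).resolve_left hx
    refine Nat.card_le_card_of_surjective (Sum.elim (fun u : Rˣ => (u : R)) (fun x => x.1)) ?_
    intro x
    by_cases hx : IsUnit x
    · exact ⟨Sum.inl hx.unit, rfl⟩
    · exact ⟨Sum.inr ⟨x, hR x hx⟩, rfl⟩
  have h3 : 2 * q ^ (k - 1) ≤ q ^ k := by
    obtain ⟨k', rfl⟩ := Nat.exists_eq_add_of_le' H.pos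
    rw [Nat.add_sub_cancel, pow_succ, mul_comm]
    exact Nat.mul_le_mul_left _ H.two_le
  omega

end IsTruncated

/-- Truncated Witt vectors over a finite field, with uniformiser `p`. -/
theorem isTruncated_witt (p k r : ℕ) [hp : Fact p.Prime] (hr : 1 ≤ r) (hk : 1 ≤ k) :
    IsTruncated (TruncatedWittVector p k (GaloisField p r))
      ((p : ℕ) : TruncatedWittVector p k (GaloisField p r)) (p ^ r) k := by
  have hcard : Nat.card (GaloisField p r) = p ^ r := GaloisField.card p r (by omega)
  have hpT : ∀ j : ℕ, ((p : ℕ) : TruncatedWittVector p k (GaloisField p r)) ^ j =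
      WittVector.truncate k ((p : WittVector p (GaloisField p r)) ^ j) := by
    intro j
    simp
  have hfin : Finite (GaloisField p r) := inferInstance
  refine ⟨?_, ?_, ?_, ?_, hk, ?_, ?_⟩
  · cases nonempty_fintype (GaloisField p r)
    rw [Nat.card_eq_fintype_card, TruncatedWittVector.card, ← Nat.card_eq_fintype_card, hcard]
  · intro x
    obtain ⟨y, rfl⟩ := WittVector.truncate_surjective p k (GaloisField p r) x
    by_cases hy : y = 0
    · refine ⟨1, k, ?_⟩
      rw [hpT, hy, map_zero, Units.val_one, one_mul]
      symm
      ext i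
      rw [WittVector.coeff_truncate, TruncatedWittVector.coeff_zero,
        WittVector.coeff_p_pow_eq_zero p (GaloisField p r) (by omega)]
    · obtain ⟨j, u, hu⟩ := WittVector.exists_eq_pow_p_mul' y hy
      refine ⟨Units.map (WittVector.truncate k : _ →+* _).toMonoidHom u, j, ?_⟩
      rw [hpT, hu, map_mul, mul_comm]
      rfl
  · intro j hj h0
    rw [hpT] at h0
    have := congrArg (TruncatedWittVector.coeff ⟨j, hj⟩) h0
    rw [WittVector.coeff_truncate, TruncatedWittVector.coeff_zero,
      WittVector.coeff_p_pow p (GaloisField p r)] at this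
    exact one_ne_zero this
  · intro b hb
    have h1 : (p ^ r) ^ (k - b) = Nat.card (Fin (k - b) → GaloisField p r) := by
      rw [Nat.card_fun, Nat.card_fin, hcard]
    rw [h1]
    refine Nat.card_le_card_of_injective
      (fun x i => TruncatedWittVector.coeff ⟨b + i, by omega⟩ x.1) ?_
    rintro ⟨x, hx⟩ ⟨y, hy⟩ e
    have hz : ∀ z : TruncatedWittVector p k (GaloisField p r),
        ((p : ℕ) : TruncatedWittVector p k (GaloisField p r)) ^ b ∣ z →
        ∀ i : Fin k, (i : ℕ) < b → z.coeff i = 0 := by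
      rintro _ ⟨c, rfl⟩ i hi
      obtain ⟨c, rfl⟩ := WittVector.truncate_surjective p k (GaloisField p r) c
      rw [hpT, ← map_mul, WittVector.coeff_truncate, mul_comm]
      exact WittVector.mul_pow_charP_coeff_zero _ hi
    apply Subtype.ext
    ext i
    rcases Nat.lt_or_ge i b with h | h
    · rw [hz x hx i h, hz y hy i h]
    · have := congrFun e ⟨i - b, by omega⟩
      simp only [Nat.add_sub_cancel' h] at this
      exact this
  · exact hp.out.two_le.trans (Nat.le_self_pow (by omega) p)
  · rw [hpT]
    ext i
    rw [WittVector.coeff_truncate, TruncatedWittVector.coeff_zero,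
      WittVector.coeff_p_pow_eq_zero p (GaloisField p r) (by omega)]

theorem isPrincipalIdealRing_witt (p k r : ℕ) [hp : Fact p.Prime] :
    IsPrincipalIdealRing (TruncatedWittVector p k (GaloisField p r)) :=
  IsPrincipalIdealRing.of_surjective
    (WittVector.truncate k : WittVector p (GaloisField p r) →+* _)
    (WittVector.truncate_surjective p k (GaloisField p r))

end TruncatedRing

/-! ### The order of the special linear group -/

section Determinants

open Matrix Polynomial

variable {n : ℕ}

/-- The matrix `diag(1, …, u, …, 1)` with `u` at position `i₀`. -/
def dg {R : Type*} [CommRing R] (i₀ : Fin n) (u : R) : Matrix (Fin n) (Fin n) R :=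
  diagonal (Function.update 1 i₀ u)

theorem det_dg {R : Type*} [CommRing R] (i₀ : Fin n) (u : R) : (dg i₀ u).det = u := by
  rw [dg, det_diagonal, Finset.prod_update_of_mem (Finset.mem_univ _)]
  simp

theorem dg_mul_dg {R : Type*} [CommRing R] (i₀ : Fin n) (u v : R) :
    dg i₀ u * dg i₀ v = dg i₀ (u * v) := by
  rw [dg, dg, diagonal_mul_diagonal, dg]
  congr 1
  funext i
  by_cases h : i = i₀
  · subst h; simp
  · simp [h]

theorem dg_one {R : Type*} [CommRing R] (i₀ : Fin n) : dg i₀ (1 : R) = 1 := by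
  rw [dg, ← diagonal_one]
  congr 1
  funext i
  by_cases h : i = i₀
  · subst h; simp
  · simp [h]

/-- `GLₙ` has order at most `|SLₙ| * |Rˣ|`, by scaling row `i₀` to determinant `1`. -/
theorem card_det_unit_le {R : Type*} [CommRing R] [Finite R] (i₀ : Fin n) :
    Nat.card {M : Matrix (Fin n) (Fin n) R // IsUnit M.det} ≤
      Nat.card (SpecialLinearGroup (Fin n) R) * Nat.card Rˣ := by
  rw [← Nat.card_prod]
  refine Nat.card_le_card_of_injective
    (fun M => (⟨dg i₀ ((M.2.unit⁻¹ : Rˣ) : R) * M.1, ?_⟩, M.2.unit)) ?_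
  · rw [det_mul, det_dg]
    exact M.2.val_inv_mul
  · rintro ⟨M, hM⟩ ⟨M', hM'⟩ e
    have h1 : hM.unit = hM'.unit := congrArg Prod.snd e
    have h2 : dg i₀ ((hM.unit⁻¹ : Rˣ) : R) * M = dg i₀ ((hM'.unit⁻¹ : Rˣ) : R) * M' :=
      congrArg (fun x => (x.1 : Matrix (Fin n) (Fin n) R)) e
    rw [← h1] at h2
    have h3 := congrArg (fun z => dg i₀ ((hM.unit : Rˣ) : R) * z) h2
    simp only [← mul_assoc, dg_mul_dg, Units.mul_inv, dg_one, one_mul] at h3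
    exact Subtype.ext h3

/-- The line `x₀ + X y` as a matrix of polynomials. -/
noncomputable def lineMat {R : Type*} [CommRing R] (x₀ y : Matrix (Fin n) (Fin n) R) :
    Matrix (Fin n) (Fin n) R[X] :=
  (X : R[X]) • y.map C + x₀.map C

theorem lineMat_map {R : Type*} [CommRing R] (x₀ y : Matrix (Fin n) (Fin n) R) (t : R) :
    (evalRingHom t).mapMatrix (lineMat x₀ y) = x₀ + t • y := by
  ext i j
  simp [lineMat, add_comm, mul_comm t]

theorem card_matrix (R : Type*) [Finite R] (n : ℕ) :
    Nat.card (Matrix (Fin n) (Fin n) R) = Nat.card R ^ (n * n) := by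
  change Nat.card (Fin n → Fin n → R) = _
  rw [Nat.card_fun, Nat.card_fun, Nat.card_fin, ← pow_mul]

/-- For `q ≥ 4 (n + 1)` at least half of all matrices are invertible. -/
theorem card_matrix_le {R : Type*} [CommRing R] [Finite R] {π : R} {q k : ℕ}
    (H : IsTruncated R π q k) (hq : 4 * (n + 1) ≤ q) (i₀ : Fin n) :
    Nat.card R ^ (n * n) ≤ 2 * (Nat.card (SpecialLinearGroup (Fin n) R) * Nat.card Rˣ) := by
  classical
  have := H.nontrivial
  have hk := H.pos
  have h1 := card_zeros_mul_units_le (V := Matrix (Fin n) (Fin n) R) π 0 (n + 1) (H.chain 0)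
    (fun M => π ^ (k - 1) * M.det) 1 (by
      intro y
      refine ⟨C (π ^ (k - 1)) * det (lineMat 1 y), ?_, ?_⟩
      · have := natDegree_det_X_add_C_le y (1 : Matrix (Fin n) (Fin n) R)
        rw [Fintype.card_fin] at this
        exact Nat.lt_succ_of_le ((natDegree_C_mul_le _ _).trans this)
      · intro t
        have := RingHom.map_det (evalRingHom t) (lineMat (1 : Matrix (Fin n) (Fin n) R) y)
        rw [lineMat_map, coe_evalRingHom] at this
        rw [eval_mul, eval_C, this]) (by
      rw [Nat.zero_mul, pow_zero, one_mul, det_one, mul_one]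
      exact H.pow_ne _ (by omega))
  have h2 := H.card_dvd (0 + 1) hk
  have h3 : Nat.card {M : Matrix (Fin n) (Fin n) R // ¬ IsUnit M.det} ≤
      Nat.card {M : Matrix (Fin n) (Fin n) R // π ^ (k - 1) * M.det = 0} := by
    refine Nat.card_le_card_of_injective (Subtype.map id fun M hM => ?_)
      (Subtype.map_injective _ Function.injective_id)
    obtain ⟨c, hc⟩ := (H.isUnit_or_dvd _).resolve_left hM
    have h4 : π ^ (k - 1) * π = 0 := by
      rw [← pow_succ, Nat.sub_add_cancel hk, H.pow_top]
    rw [id, hc, ← mul_assoc, h4, zero_mul]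
  have h4 : Nat.card (Matrix (Fin n) (Fin n) R) =
      Nat.card {M : Matrix (Fin n) (Fin n) R // IsUnit M.det} +
        Nat.card {M : Matrix (Fin n) (Fin n) R // ¬ IsUnit M.det} := by
    rw [← Nat.card_sum]
    exact Nat.card_congr (Equiv.sumCompl _).symm
  have h5 := card_det_unit_le (R := R) i₀
  have h6 := H.card_le_units
  rw [← card_matrix]
  set V := Nat.card (Matrix (Fin n) (Fin n) R)
  set N := Nat.card {M : Matrix (Fin n) (Fin n) R // ¬ IsUnit M.det}
  set U := Nat.card {M : Matrix (Fin n) (Fin n) R // IsUnit M.det}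
  have h7 : N * q ^ k ≤ V * (2 * (n + 1)) * q ^ (k - 1) := calc
    N * q ^ k ≤ N * (2 * Nat.card Rˣ) := Nat.mul_le_mul_left _ h6
    _ = 2 * (N * Nat.card Rˣ) := by ring
    _ ≤ 2 * (V * ((n + 1) * q ^ (k - (0 + 1)))) := Nat.mul_le_mul_left _
        ((Nat.mul_le_mul_right _ h3).trans
          (h1.trans (Nat.mul_le_mul_left _ (Nat.mul_le_mul_left _ h2))))
    _ = _ := by rw [Nat.zero_add]; ring
  have h8 : N * q ≤ V * (2 * (n + 1)) := by
    have hp : 0 < q ^ (k - 1) := by have := H.two_le; positivity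
    refine Nat.le_of_mul_le_mul_right ?_ hp
    refine le_trans (le_of_eq ?_) h7
    rw [mul_assoc, ← pow_succ', Nat.sub_add_cancel hk]
  have h9 : 2 * N ≤ V := by
    refine Nat.le_of_mul_le_mul_right (c := 2 * (n + 1)) ?_ (by omega)
    refine le_trans ?_ h8
    rw [show 2 * N * (2 * (n + 1)) = N * (4 * (n + 1)) by ring]
    exact Nat.mul_le_mul_left _ hq
  omega

end Determinants

/-! ### The fibre bound for small rank -/

section Small

open Matrix Polynomial

variable {n : ℕ} {ι : Type*}

/-- If `M = dg u * g` with `det g = 1`, then `letA M = u • g`. -/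
def letA {R : Type*} [CommRing R] (i₀ : Fin n) (M : Matrix (Fin n) (Fin n) R) :
    Matrix (Fin n) (Fin n) R :=
  diagonal (Function.update (fun _ => M.det) i₀ 1) * M

/-- If `M = dg u * g` with `det g = 1`, then `letB M = u • g⁻¹`. -/
def letB {R : Type*} [CommRing R] (i₀ : Fin n) (M : Matrix (Fin n) (Fin n) R) :
    Matrix (Fin n) (Fin n) R :=
  adjugate M * dg i₀ M.det

/-- A word evaluated at arbitrary matrices, homogenised by determinants. -/
def wordMat {R : Type*} [CommRing R] (i₀ : Fin n) (L : List (ι × Bool))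
    (M : ι → Matrix (Fin n) (Fin n) R) : Matrix (Fin n) (Fin n) R :=
  (L.map fun x => cond x.2 (letA i₀ (M x.1)) (letB i₀ (M x.1))).prod

/-- The scalar by which `wordMat` differs from the value of the word. -/
def wordDet {R : Type*} [CommRing R] (L : List (ι × Bool))
    (M : ι → Matrix (Fin n) (Fin n) R) : R :=
  (L.map fun x => (M x.1).det).prod

theorem map_dg {R S : Type*} [CommRing R] [CommRing S] (f : R →+* S) (i₀ : Fin n) (u : R) :
    f.mapMatrix (dg i₀ u) = dg i₀ (f u) := by
  ext i j
  by_cases hij : i = j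
  · subst hij
    by_cases h : i = i₀
    · subst h; simp [dg]
    · simp [dg, h]
  · simp [dg, hij]

theorem map_letA {R S : Type*} [CommRing R] [CommRing S] (f : R →+* S) (i₀ : Fin n)
    (M : Matrix (Fin n) (Fin n) R) :
    f.mapMatrix (letA i₀ M) = letA i₀ (f.mapMatrix M) := by
  rw [letA, letA, map_mul, ← RingHom.map_det]
  congr 1
  ext i j
  by_cases hij : i = j
  · subst hij
    by_cases h : i = i₀
    · subst h; simp
    · simp [h]
  · simp [hij]

theorem map_letB {R S : Type*} [CommRing R] [CommRing S] (f : R →+* S) (i₀ : Fin n)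
    (M : Matrix (Fin n) (Fin n) R) :
    f.mapMatrix (letB i₀ M) = letB i₀ (f.mapMatrix M) := by
  rw [letB, letB, map_mul, ← RingHom.map_det, map_dg, RingHom.map_adjugate]

theorem map_wordMat {R S : Type*} [CommRing R] [CommRing S] (f : R →+* S) (i₀ : Fin n)
    (L : List (ι × Bool)) (M : ι → Matrix (Fin n) (Fin n) R) :
    f.mapMatrix (wordMat i₀ L M) = wordMat i₀ L (fun i => f.mapMatrix (M i)) := by
  rw [wordMat, wordMat, map_list_prod, List.map_map]
  congr 1
  refine List.map_congr_left fun x _ => ?_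
  rcases x with ⟨i, _ | _⟩
  · exact map_letB f i₀ _
  · exact map_letA f i₀ _

theorem map_wordDet {R S : Type*} [CommRing R] [CommRing S] (f : R →+* S)
    (L : List (ι × Bool)) (M : ι → Matrix (Fin n) (Fin n) R) :
    f (wordDet L M) = wordDet L (fun i => f.mapMatrix (M i)) := by
  rw [wordDet, wordDet, map_list_prod, List.map_map]
  congr 1
  refine List.map_congr_left fun x _ => ?_
  exact RingHom.map_det f _

theorem letA_dg {R : Type*} [CommRing R] (i₀ : Fin n) (u : R)
    (g : SpecialLinearGroup (Fin n) R) :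
    letA i₀ (dg i₀ u * (g : Matrix (Fin n) (Fin n) R)) = u • (g : Matrix (Fin n) (Fin n) R) := by
  rw [letA, det_mul, det_dg, g.2, mul_one, ← mul_assoc, dg, diagonal_mul_diagonal]
  ext i j
  by_cases h : i = i₀
  · subst h; simp
  · simp [h]

theorem letB_dg {R : Type*} [CommRing R] (i₀ : Fin n) (u : R)
    (g : SpecialLinearGroup (Fin n) R) :
    letB i₀ (dg i₀ u * (g : Matrix (Fin n) (Fin n) R)) =
      u • ((g⁻¹ : SpecialLinearGroup (Fin n) R) : Matrix (Fin n) (Fin n) R) := by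
  rw [letB, det_mul, det_dg, g.2, mul_one, adjugate_mul_distrib, mul_assoc]
  have h : adjugate (dg i₀ u) * dg i₀ u = u • (1 : Matrix (Fin n) (Fin n) R) := by
    rw [adjugate_mul, det_dg]
  rw [h, Matrix.mul_smul, mul_one]
  rfl

theorem wordMat_dg {R : Type*} [CommRing R] (i₀ : Fin n) (L : List (ι × Bool)) (u : ι → R)
    (g : ι → SpecialLinearGroup (Fin n) R) :
    wordMat i₀ L (fun i => dg i₀ (u i) * (g i : Matrix (Fin n) (Fin n) R)) =
      wordDet L (fun i => dg i₀ (u i) * (g i : Matrix (Fin n) (Fin n) R)) •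
        ((FreeGroup.lift g (FreeGroup.mk L) : SpecialLinearGroup (Fin n) R) :
          Matrix (Fin n) (Fin n) R) := by
  induction L with
  | nil =>
    have : FreeGroup.lift g (FreeGroup.mk []) = 1 := rfl
    rw [this]
    simp [wordMat, wordDet]
  | cons x L ih =>
    have h1 : FreeGroup.lift g (FreeGroup.mk (x :: L)) =
        cond x.2 (g x.1) (g x.1)⁻¹ * FreeGroup.lift g (FreeGroup.mk L) := by
      simp [FreeGroup.lift_mk]
    have h2 : ∀ M : ι → Matrix (Fin n) (Fin n) R, wordMat i₀ (x :: L) M =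
        cond x.2 (letA i₀ (M x.1)) (letB i₀ (M x.1)) * wordMat i₀ L M := fun M => by
      simp [wordMat]
    have h3 : ∀ M : ι → Matrix (Fin n) (Fin n) R, wordDet (x :: L) M =
        (M x.1).det * wordDet L M := fun M => by simp [wordDet]
    have h4 : (dg i₀ (u x.1) * (g x.1 : Matrix (Fin n) (Fin n) R)).det = u x.1 := by
      rw [det_mul, det_dg, (g x.1).2, mul_one]
    rw [h1, h2, h3, ih, h4, Matrix.SpecialLinearGroup.coe_mul, mul_smul, Matrix.mul_smul]
    rcases x with ⟨i, _ | _⟩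
    · simp only [cond_false]
      rw [letB_dg, Matrix.smul_mul, smul_comm]
    · simp only [cond_true]
      rw [letA_dg, Matrix.smul_mul, smul_comm]

/-- All entries of a polynomial matrix have degree at most `d`. -/
def DegLE {R : Type*} [CommRing R] (M : Matrix (Fin n) (Fin n) R[X]) (d : ℕ) : Prop :=
  ∀ i j, (M i j).natDegree ≤ d

theorem DegLE.mul {R : Type*} [CommRing R] {M N : Matrix (Fin n) (Fin n) R[X]} {d e : ℕ}
    (hM : DegLE M d) (hN : DegLE N e) : DegLE (M * N) (d + e) := by
  intro i j
  rw [mul_apply]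
  exact natDegree_sum_le_of_forall_le _ _ fun l _ => natDegree_mul_le_of_le (hM i l) (hN l j)

theorem DegLE.mono {R : Type*} [CommRing R] {M : Matrix (Fin n) (Fin n) R[X]} {d e : ℕ}
    (hM : DegLE M d) (h : d ≤ e) : DegLE M e := fun i j => (hM i j).trans h

theorem DegLE.det {R : Type*} [CommRing R] {M : Matrix (Fin n) (Fin n) R[X]}
    (hM : DegLE M 1) : M.det.natDegree ≤ n := by
  rw [det_apply]
  refine natDegree_sum_le_of_forall_le _ _ fun σ _ => ?_
  refine (natDegree_smul_le _ _).trans ?_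
  refine (natDegree_prod_le _ _).trans ?_
  refine (Finset.sum_le_sum fun i _ => hM (σ i) i).trans ?_
  simp

theorem DegLE.adjugate {R : Type*} [CommRing R] {M : Matrix (Fin n) (Fin n) R[X]}
    (hM : DegLE M 1) : DegLE (adjugate M) n := by
  intro i j
  rw [adjugate_apply]
  refine DegLE.det fun a b => ?_
  rw [updateRow_apply]
  split_ifs
  · rw [Pi.single_apply]
    split_ifs <;> simp
  · exact hM a b

theorem DegLE.diagonal {R : Type*} [CommRing R] {v : Fin n → R[X]} {d : ℕ}
    (hv : ∀ i, (v i).natDegree ≤ d) : DegLE (diagonal v) d := by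
  intro i j
  rw [diagonal_apply]
  split_ifs
  · exact hv i
  · simp

theorem DegLE.letA {R : Type*} [CommRing R] (i₀ : Fin n) {M : Matrix (Fin n) (Fin n) R[X]}
    (hM : DegLE M 1) : DegLE (letA i₀ M) (2 * n) := by
  have hn : 0 < n := i₀.pos
  refine (DegLE.mul (DegLE.diagonal (d := n) fun i => ?_) hM).mono (by omega)
  rw [Function.update_apply]
  split_ifs
  · simp
  · exact hM.det

theorem DegLE.letB {R : Type*} [CommRing R] (i₀ : Fin n) {M : Matrix (Fin n) (Fin n) R[X]}
    (hM : DegLE M 1) : DegLE (letB i₀ M) (2 * n) := by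
  refine (DegLE.mul hM.adjugate (DegLE.diagonal (d := n) fun i => ?_)).mono (by omega)
  rw [Function.update_apply]
  split_ifs
  · exact hM.det
  · simp

theorem DegLE.wordMat {R : Type*} [CommRing R] (i₀ : Fin n) (L : List (ι × Bool))
    {M : ι → Matrix (Fin n) (Fin n) R[X]} (hM : ∀ i, DegLE (M i) 1) :
    DegLE (wordMat i₀ L M) (2 * n * L.length) := by
  induction L with
  | nil =>
    intro i j
    rw [WordFiber.wordMat, List.map_nil, List.prod_nil, one_apply]
    split_ifs <;> simp
  | cons x L ih =>
    rw [WordFiber.wordMat, List.map_cons, List.prod_cons, List.length_cons]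
    refine (DegLE.mul (d := 2 * n) ?_ ih).mono (by rw [mul_add]; omega)
    rcases x with ⟨i, _ | _⟩
    · exact (hM i).letB i₀
    · exact (hM i).letA i₀

theorem natDegree_wordDet_le {R : Type*} [CommRing R] (L : List (ι × Bool))
    {M : ι → Matrix (Fin n) (Fin n) R[X]} (hM : ∀ i, DegLE (M i) 1) :
    (wordDet L M).natDegree ≤ n * L.length := by
  induction L with
  | nil => simp [wordDet]
  | cons x L ih =>
    rw [wordDet, List.map_cons, List.prod_cons, List.length_cons]
    refine (natDegree_mul_le_of_le (hM x.1).det ih).trans (by rw [mul_add]; omega)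

theorem degLE_lineMat {R : Type*} [CommRing R] (x y : Matrix (Fin n) (Fin n) R) :
    DegLE (lineMat x y) 1 := by
  intro i j
  have : lineMat x y i j = C (y i j) * X + C (x i j) := by
    simp [lineMat, X_mul_C]
  rw [this]
  exact natDegree_linear_le

/-- The discrepancy between the homogenised word and `h`, at the entry `(c, d)`. -/
def disc {R : Type*} [CommRing R] (i₀ : Fin n) (L : List (ι × Bool)) (h : Matrix (Fin n) (Fin n) R)
    (c d : Fin n) (M : ι → Matrix (Fin n) (Fin n) R) : R :=
  wordMat i₀ L M c d - wordDet L M * h c d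

theorem disc_line {R : Type*} [CommRing R] (i₀ : Fin n) (L : List (ι × Bool))
    (h : Matrix (Fin n) (Fin n) R) (c d : Fin n) (x y : ι → Matrix (Fin n) (Fin n) R) :
    ∃ P : R[X], P.natDegree < 2 * n * L.length + 1 ∧ ∀ t, P.eval t = disc i₀ L h c d (x + t • y) := by
  refine ⟨wordMat i₀ L (fun i => lineMat (x i) (y i)) c d -
    wordDet L (fun i => lineMat (x i) (y i)) * C (h c d), ?_, ?_⟩
  · refine Nat.lt_succ_of_le ((natDegree_sub_le_of_le (DegLE.wordMat i₀ L
      (fun i => degLE_lineMat (x i) (y i)) c d) (n := 2 * n * L.length) ?_).trans (max_self _).le)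
    refine (natDegree_mul_C_le _ _).trans ((natDegree_wordDet_le L
      (fun i => degLE_lineMat (x i) (y i))).trans ?_)
    exact Nat.mul_le_mul_right _ (by omega)
  · intro t
    have h1 := map_wordMat (evalRingHom t) i₀ L (fun i => lineMat (x i) (y i))
    have h2 := map_wordDet (evalRingHom t) L (fun i => lineMat (x i) (y i))
    simp only [lineMat_map] at h1 h2
    have h3 := congrFun (congrFun h1 c) d
    rw [RingHom.mapMatrix_apply, map_apply] at h3
    rw [coe_evalRingHom] at h2 h3
    rw [eval_sub, eval_mul, eval_C, h2, h3]
    rfl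

theorem disc_dg {R : Type*} [CommRing R] (i₀ : Fin n) (L : List (ι × Bool)) (u : ι → R)
    (g : ι → SpecialLinearGroup (Fin n) R) (h : SpecialLinearGroup (Fin n) R) (c d : Fin n)
    (hg : FreeGroup.lift g (FreeGroup.mk L) = h) :
    disc i₀ L h c d (fun i => dg i₀ (u i) * (g i : Matrix (Fin n) (Fin n) R)) = 0 := by
  rw [disc, wordMat_dg, hg]
  simp

theorem disc_sl {R : Type*} [CommRing R] (i₀ : Fin n) (L : List (ι × Bool))
    (g : ι → SpecialLinearGroup (Fin n) R) (h : Matrix (Fin n) (Fin n) R) (c d : Fin n) :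
    disc i₀ L h c d (fun i => (g i : Matrix (Fin n) (Fin n) R)) =
      (FreeGroup.lift g (FreeGroup.mk L) : SpecialLinearGroup (Fin n) R) c d - h c d := by
  have h1 := wordMat_dg i₀ L (fun _ => 1) g
  simp only [dg_one, one_mul] at h1
  have h2 : wordDet L (fun i => (g i : Matrix (Fin n) (Fin n) R)) = 1 := by
    simp [wordDet]
  rw [disc, h1, h2]
  simp

/-- Rescaling each matrix of a solution by a unit in row `i₀` embeds (fibre) × `(Rˣ) ^ s` into the
zero set of `disc`. -/
theorem card_fiber_mul_le {R : Type*} [CommRing R] [Finite R] {s : ℕ} (i₀ : Fin n)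
    (L : List (Fin s × Bool)) (h : SpecialLinearGroup (Fin n) R) (c d : Fin n) :
    Nat.card {g : Fin s → SpecialLinearGroup (Fin n) R // FreeGroup.lift g (FreeGroup.mk L) = h} *
      Nat.card Rˣ ^ s ≤
    Nat.card {M : Fin s → Matrix (Fin n) (Fin n) R // disc i₀ L h c d M = 0} := by
  have h1 : Nat.card Rˣ ^ s = Nat.card (Fin s → Rˣ) := by rw [Nat.card_fun, Nat.card_fin]
  rw [h1, ← Nat.card_prod]
  refine Nat.card_le_card_of_injective
    (fun a => ⟨fun i => dg i₀ (a.2 i : R) * (a.1.1 i : Matrix (Fin n) (Fin n) R),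
      disc_dg i₀ L (fun i => (a.2 i : R)) a.1.1 h c d a.1.2⟩) ?_
  rintro ⟨⟨g, hg⟩, u⟩ ⟨⟨g', hg'⟩, u'⟩ e
  have h2 : ∀ i, dg i₀ (u i : R) * (g i : Matrix (Fin n) (Fin n) R) =
      dg i₀ (u' i : R) * (g' i : Matrix (Fin n) (Fin n) R) :=
    fun i => congrFun (congrArg Subtype.val e) i
  have hu : u = u' := by
    funext i
    have h3 := congrArg det (h2 i)
    rw [det_mul, det_mul, det_dg, det_dg, (g i).2, (g' i).2, mul_one, mul_one] at h3
    exact Units.ext h3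
  subst hu
  have hg : g = g' := by
    funext i
    apply Subtype.ext
    have h3 := congrArg (fun z => dg i₀ (((u i)⁻¹ : Rˣ) : R) * z) (h2 i)
    simp only [← mul_assoc, dg_mul_dg, Units.inv_mul, dg_one, one_mul] at h3
    exact h3
  subst hg
  rfl

/-- Fibre bound for bounded rank. The word value is compared with `h` at the trivial tuple and at
`γ`; since `w(γ) - 1` has a unit entry, one of the two differences has a unit entry as well. -/
theorem card_fiber_sq_mul_le {R : Type*} [CommRing R] {π : R} {q k s : ℕ}
    (H : IsTruncated R π q k) (i₀ : Fin n) (L : List (Fin s × Bool))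
    (hq : 4 * (n + 1) ≤ q) (hq2 : (2 ^ (s + 1) * (2 * n * L.length + 1)) ^ 2 ≤ q)
    (γ : Fin s → SpecialLinearGroup (Fin n) R) (c d : Fin n)
    (hγ : IsUnit ((FreeGroup.lift γ (FreeGroup.mk L) : SpecialLinearGroup (Fin n) R) c d -
      (1 : Matrix (Fin n) (Fin n) R) c d))
    (h : SpecialLinearGroup (Fin n) R) :
    Nat.card {g : Fin s → SpecialLinearGroup (Fin n) R // FreeGroup.lift g (FreeGroup.mk L) = h} ^ 2
      * q ^ ((k - 1) / (2 * n * L.length + 1) + 1) ≤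
    Nat.card (SpecialLinearGroup (Fin n) R) ^ (2 * s) := by
  have hfin := H.finite
  have hnt := H.nontrivial
  have hk := H.pos
  set D := 2 * n * L.length + 1 with hD
  set b := (k - 1) / D with hb
  have hbD : b * D ≤ k - 1 := Nat.div_mul_le_self _ _
  have hbk : b ≤ k - 1 := Nat.div_le_self _ _
  obtain ⟨x₀, hx₀⟩ : ∃ x₀ : Fin s → Matrix (Fin n) (Fin n) R, IsUnit (disc i₀ L h c d x₀) := by
    by_contra! hcon
    have h1 := (H.isUnit_or_dvd _).resolve_left
      (hcon (fun i => ((1 : SpecialLinearGroup (Fin n) R) : Matrix (Fin n) (Fin n) R)))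
    have h2 := (H.isUnit_or_dvd _).resolve_left
      (hcon (fun i => (γ i : Matrix (Fin n) (Fin n) R)))
    rw [disc_sl] at h1 h2
    have h3 : FreeGroup.lift (fun _ : Fin s => (1 : SpecialLinearGroup (Fin n) R))
        (FreeGroup.mk L) = 1 := by
      have : FreeGroup.lift (fun _ : Fin s => (1 : SpecialLinearGroup (Fin n) R)) = 1 := by
        ext; simp
      rw [this]; rfl
    rw [h3] at h1
    have h4 := dvd_sub h2 h1
    rw [sub_sub_sub_cancel_right] at h4
    exact H.not_isUnit (isUnit_of_dvd_unit h4 hγ)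
  have hne : π ^ (b * D) * disc i₀ L h c d x₀ ≠ 0 := fun h0 =>
    H.pow_ne (b * D) (by lia) (hx₀.mul_left_eq_zero.1 h0)
  have h1 := card_zeros_mul_units_le π b D (H.chain b) (disc i₀ L (h : Matrix _ _ R) c d) x₀
    (fun y => disc_line i₀ L h c d x₀ y) hne
  have h2 := card_fiber_mul_le i₀ L h c d
  have h3 := H.card_dvd (b + 1) (by omega)
  have h4 := card_matrix_le H hq i₀
  have h5 := H.card_le_units
  have hV : Nat.card (Fin s → Matrix (Fin n) (Fin n) R) = (Nat.card R ^ (n * n)) ^ s := by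
    rw [Nat.card_fun, Nat.card_fin, card_matrix]
  rw [hV] at h1
  have hU : 0 < Nat.card Rˣ := Nat.card_pos
  set F := Nat.card {g : Fin s → SpecialLinearGroup (Fin n) R //
    FreeGroup.lift g (FreeGroup.mk L) = h}
  set U := Nat.card Rˣ
  set G := Nat.card (SpecialLinearGroup (Fin n) R)
  have hq0 : 0 < q := by have := H.two_le; omega
  have h6 : F * q ^ (b + 1) ≤ 2 ^ (s + 1) * D * G ^ s := by
    refine Nat.le_of_mul_le_mul_right (c := U ^ s * q ^ (k - (b + 1))) ?_ (by positivity)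
    calc F * q ^ (b + 1) * (U ^ s * q ^ (k - (b + 1)))
        = F * U ^ s * q ^ k := by
          rw [show k = (b + 1) + (k - (b + 1)) by omega, pow_add]
          simp only [Nat.add_sub_cancel_left]
          ring
      _ ≤ F * U ^ s * (2 * U) := Nat.mul_le_mul_left _ h5
      _ = 2 * (F * U ^ s * U) := by ring
      _ ≤ 2 * ((2 * (G * U)) ^ s * (D * q ^ (k - (b + 1)))) := by
          refine Nat.mul_le_mul_left _ ((Nat.mul_le_mul_right _ h2).trans (h1.trans ?_))
          exact Nat.mul_le_mul (Nat.pow_le_pow_left h4 s) (Nat.mul_le_mul_left _ h3)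
      _ = _ := by rw [mul_pow, mul_pow]; ring
  refine Nat.le_of_mul_le_mul_right (c := q ^ (b + 1)) ?_ (by positivity)
  calc F ^ 2 * q ^ (b + 1) * q ^ (b + 1) = (F * q ^ (b + 1)) ^ 2 := by ring
    _ ≤ (2 ^ (s + 1) * D * G ^ s) ^ 2 := Nat.pow_le_pow_left h6 2
    _ = G ^ (2 * s) * (2 ^ (s + 1) * D) ^ 2 := by ring
    _ ≤ G ^ (2 * s) * q ^ (b + 1) := by
      refine Nat.mul_le_mul_left _ (hq2.trans ?_)
      exact Nat.le_self_pow (Nat.succ_ne_zero b) q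

end Small

/-! ### An integer tuple on which the word is nontrivial -/

section IntegerTuple

open Matrix

/-- The direction `i e₀ + e₁` fixed by the `i`-th transvection. -/
def tv (n : ℕ) (hn : 2 ≤ n) (i : ℤ) : Fin n → ℤ :=
  Pi.single ⟨0, by omega⟩ i + Pi.single ⟨1, by omega⟩ 1

/-- The linear form `x ↦ x₀ - i x₁` of the `i`-th transvection; it vanishes on `tv n hn i`. -/
def tf (n : ℕ) (hn : 2 ≤ n) (i : ℤ) : Fin n → ℤ :=
  Pi.single ⟨0, by omega⟩ 1 - Pi.single ⟨1, by omega⟩ i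

theorem tf_dotProduct (n : ℕ) (hn : 2 ≤ n) (i : ℤ) (x : Fin n → ℤ) :
    tf n hn i ⬝ᵥ x = x ⟨0, by omega⟩ - i * x ⟨1, by omega⟩ := by
  rw [tf, sub_dotProduct, single_dotProduct, single_dotProduct, one_mul]

theorem tf_tv (n : ℕ) (hn : 2 ≤ n) (i j : ℤ) : tf n hn j ⬝ᵥ tv n hn i = i - j := by
  rw [tf_dotProduct]
  simp [tv]

/-- The transvection `x ↦ x + T φᵢ(x) vᵢ`. -/
def tg (n : ℕ) (hn : 2 ≤ n) (T i : ℤ) : SpecialLinearGroup (Fin n) ℤ :=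
  ⟨1 + vecMulVec (T • tv n hn i) (tf n hn i), by
    rw [vecMulVec_eq Unit, det_one_add_replicateCol_mul_replicateRow, dotProduct_smul, tf_tv]
    simp⟩

theorem tg_mulVec (n : ℕ) (hn : 2 ≤ n) (T i : ℤ) (x : Fin n → ℤ) :
    (tg n hn T i : Matrix (Fin n) (Fin n) ℤ) *ᵥ x = x + (T * (tf n hn i ⬝ᵥ x)) • tv n hn i := by
  rw [tg, add_mulVec, one_mulVec, vecMulVec_mulVec]
  ext j
  simp
  ring

theorem tg_inv_mulVec (n : ℕ) (hn : 2 ≤ n) (T i : ℤ) (x : Fin n → ℤ) :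
    ((tg n hn T i)⁻¹ : SpecialLinearGroup (Fin n) ℤ).1 *ᵥ x =
      x - (T * (tf n hn i ⬝ᵥ x)) • tv n hn i := by
  have h : x = (tg n hn T i).1 *ᵥ (x - (T * (tf n hn i ⬝ᵥ x)) • tv n hn i) := by
    rw [tg_mulVec, dotProduct_sub, dotProduct_smul, tf_tv]
    simp
  have h2 : ((tg n hn T i)⁻¹ : SpecialLinearGroup (Fin n) ℤ).1 * (tg n hn T i).1 = 1 := by
    rw [← Matrix.SpecialLinearGroup.coe_mul, inv_mul_cancel]; rfl
  conv_lhs => rw [h]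
  rw [mulVec_mulVec, h2, one_mulVec]

/-- The size of a coordinate after a transvection, relative to the size before. -/
theorem abs_bounds {B s P c f u : ℤ} (hf : |f| ≤ B * P) (hu : |u| ≤ s) :
    (1 ≤ |u| → |c| - B * P ≤ |f + c * u|) ∧ |f + c * u| ≤ B * P + |c| * s := by
  have h1 : |c * u| = |c| * |u| := abs_mul c u
  have h0 := abs_nonneg c
  constructor
  · intro hu1
    have h2 := abs_sub_abs_le_abs_sub (c * u) (-f)
    rw [abs_neg, sub_neg_eq_add, add_comm (c * u)] at h2
    nlinarith
  · have h2 := abs_add_le f (c * u)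
    nlinarith

/-- Ping-pong with large powers of transvections in general position. Apply the letters of a
reduced word successively to a vector. Along a run of the same letter the vector moves in the fixed
direction of that letter, by a multiple of `T` times the value `φ` of its linear form. That value
is constant along the run, and at the start of the run it is comparable (within the factor `B`) to
the largest of the forms `φ j`. After the run the displacement dominates the forms of all other
letters, so the comparison holds again at the start of the next run. The extra form `φ s`, which
belongs to no letter, separates the final vector from the initial one. -/
theorem exists_int_tuple (s n : ℕ) (hn : 2 ≤ n) (L : List (Fin s × Bool)) (hL : L ≠ [])
    (hr : FreeGroup.IsReduced L) :
    ∃ γ : Fin s → SpecialLinearGroup (Fin n) ℤ, FreeGroup.lift γ (FreeGroup.mk L) ≠ 1 := by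
  obtain ⟨B, hB⟩ : ∃ B : ℤ, B = s + 2 := ⟨_, rfl⟩
  obtain ⟨T, hT⟩ : ∃ T : ℤ, T = B + B ^ 2 := ⟨_, rfl⟩
  have hs0 : (0 : ℤ) ≤ s := Int.natCast_nonneg s
  have hTpos : 0 < T := by rw [hT, hB]; positivity
  let γ : Fin s → SpecialLinearGroup (Fin n) ℤ := fun i => tg n hn T (i : ℕ)
  let φ : ℤ → (Fin n → ℤ) → ℤ := fun j x => tf n hn j ⬝ᵥ x
  -- A starting vector in general position with respect to all the forms.
  let v₀ : Fin n → ℤ := tv n hn (-1)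
  let act : List (Fin s × Bool) → Fin n → ℤ := fun L =>
    (FreeGroup.lift γ (FreeGroup.mk L) : SpecialLinearGroup (Fin n) ℤ).1 *ᵥ v₀
  let sg : Bool → ℤ := fun b => cond b 1 (-1)
  have hsg : ∀ b, |sg b| = 1 := by rintro (_ | _) <;> simp [sg]
  have hφv : ∀ i j c x, φ j (x + c • tv n hn i) = φ j x + c * (i - j) := by
    intro i j c x
    simp only [φ]
    rw [dotProduct_add, dotProduct_smul, tf_tv, smul_eq_mul]
  have hact : ∀ x L, act (x :: L) =
      act L + (T * sg x.2 * φ ((x.1 : ℕ) : ℤ) (act L)) • tv n hn ((x.1 : ℕ) : ℤ) := by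
    rintro ⟨i, b⟩ L
    have h1 : FreeGroup.lift γ (FreeGroup.mk ((i, b) :: L)) =
        cond b (γ i) (γ i)⁻¹ * FreeGroup.lift γ (FreeGroup.mk L) := by
      simp [FreeGroup.lift_mk]
    simp only [act]
    rw [h1, Matrix.SpecialLinearGroup.coe_mul, ← mulVec_mulVec]
    cases b
    · simp only [cond_false, sg, γ]
      rw [tg_inv_mulVec]
      simp only [φ, mul_neg, mul_one, neg_mul, neg_smul, sub_eq_add_neg]
    · simp only [cond_true, sg, γ]
      rw [tg_mulVec]
      simp only [φ, mul_one]
  have hφ0 : ∀ j : ℤ, φ j v₀ = -1 - j := fun j => tf_tv n hn (-1) j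
  -- `x₀` is the vector at the start of the current run of equal letters, `m` the run length.
  have key : ∀ L : List (Fin s × Bool), FreeGroup.IsReduced L → ∀ x L', L = x :: L' →
      ∃ (x₀ : Fin n → ℤ) (m : ℤ), 1 ≤ m ∧ φ ((x.1 : ℕ) : ℤ) x₀ ≠ 0 ∧
        (∀ j : ℕ, j ≤ s → |φ j x₀| ≤ B * |φ ((x.1 : ℕ) : ℤ) x₀|) ∧
        act L = x₀ + (T * sg x.2 * m * φ ((x.1 : ℕ) : ℤ) x₀) • tv n hn ((x.1 : ℕ) : ℤ) := by
    intro L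
    induction L with
    | nil => intro _ x L' h; cases h
    | cons y L ih =>
      intro hred x L' h
      obtain ⟨rfl, rfl⟩ := List.cons.inj h
      cases L with
      | nil =>
        have h1 : act [] = v₀ := by
          have : FreeGroup.lift γ (FreeGroup.mk []) = 1 := rfl
          simp only [act]
          rw [this]
          simp
        refine ⟨v₀, 1, le_rfl, ?_, ?_, ?_⟩
        · rw [hφ0]; omega
        · intro j hj
          rw [hφ0, hφ0, abs_of_neg (by omega), abs_of_neg (by omega)]
          nlinarith
        · rw [hact, h1, mul_one]
      | cons z L =>
        unfold FreeGroup.IsReduced at hred ih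
        rw [List.isChain_cons_cons] at hred
        obtain ⟨x₀, m, hm, hα, hb, hx⟩ := ih hred.2 z L rfl
        by_cases hyz : y.1 = z.1
        · have hyz2 := hred.1 hyz
          refine ⟨x₀, m + 1, by omega, by rw [hyz]; exact hα, by rw [hyz]; exact hb, ?_⟩
          rw [hact, hx, hφv, hyz, hyz2, sub_self, mul_zero, add_zero, add_assoc, ← add_smul]
          congr 2
          ring
        · set α := φ ((z.1 : ℕ) : ℤ) x₀ with hαd
          set c := T * sg z.2 * m * α with hc
          have hα1 : 1 ≤ |α| := Int.one_le_abs hα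
          have hcabs : |c| = T * m * |α| := by
            rw [hc, abs_mul, abs_mul, abs_mul, hsg, abs_of_pos hTpos, abs_of_nonneg (by omega)]
            ring
          have hcT : T * |α| ≤ |c| := by
            rw [hcabs]
            nlinarith [mul_pos hTpos (by omega : 0 < |α|)]
          have hy1 := y.1.2
          have hz1 := z.1.2
          have hyz' : (y.1 : ℕ) ≠ (z.1 : ℕ) := fun e => hyz (Fin.ext e)
          have h1 := (abs_bounds (c := c) (u := ((z.1 : ℕ) : ℤ) - ((y.1 : ℕ) : ℤ)) (hb y.1 hy1.le)
            (s := s) (by rw [abs_le]; omega)).1 (Int.one_le_abs (by omega))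
          rw [← hφv, ← hx] at h1
          have hTα : (B + B ^ 2) * |α| ≤ |c| := hT ▸ hcT
          refine ⟨act (z :: L), 1, le_rfl, ?_, ?_, ?_⟩
          · rw [← abs_pos]
            nlinarith [sq_nonneg B]
          · intro j hj
            have h2 := (abs_bounds (c := c) (u := ((z.1 : ℕ) : ℤ) - (j : ℤ)) (hb j hj)
              (s := s) (by rw [abs_le]; omega)).2
            rw [← hφv, ← hx] at h2
            have h3 : B * (|c| - B * |α|) ≤ B * |φ ((y.1 : ℕ) : ℤ) (act (z :: L))| :=
              mul_le_mul_of_nonneg_left h1 (by omega)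
            have h4 : (B * |c|) = s * |c| + 2 * |c| := by rw [hB]; ring
            nlinarith [abs_nonneg c]
          · rw [hact, mul_one]
  refine ⟨γ, fun h1 => ?_⟩
  obtain ⟨x, L', rfl⟩ := List.exists_cons_of_ne_nil hL
  obtain ⟨x₀, m, hm, hα, hb, hx⟩ := key _ hr x L' rfl
  have hv : act (x :: L') = v₀ := by
    simp only [act]
    rw [h1]
    simp
  set α := φ ((x.1 : ℕ) : ℤ) x₀ with hαd
  set c := T * sg x.2 * m * α with hc
  have hα1 : 1 ≤ |α| := Int.one_le_abs hα
  have hcabs : |c| = T * m * |α| := by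
    rw [hc, abs_mul, abs_mul, abs_mul, hsg, abs_of_pos hTpos, abs_of_nonneg (by omega)]
    ring
  have hcT : T * |α| ≤ |c| := by
    rw [hcabs]
    nlinarith [mul_pos hTpos (by omega : 0 < |α|)]
  have hx1 := x.1.2
  have h2 := (abs_bounds (c := c) (u := ((x.1 : ℕ) : ℤ) - (s : ℤ)) (hb s le_rfl)
    (s := s) (by rw [abs_le]; omega)).1 (Int.one_le_abs (by omega))
  rw [← hφv, ← hx, hv, hφ0] at h2
  have h4 : |-1 - (s : ℤ)| = s + 1 := by rw [abs_of_neg (by omega)]; ring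
  have h3 : (B + B ^ 2) * |α| ≤ |c| := hT ▸ hcT
  have h5 : B ^ 2 ≤ B ^ 2 * |α| := le_mul_of_one_le_right (sq_nonneg B) hα1
  have h6 : B ^ 2 = s * s + 4 * s + 4 := by rw [hB]; ring
  nlinarith

end IntegerTuple

/-! ### Combining the two regimes -/

section Assembly

open Matrix

theorem card_sl_le {R : Type*} [CommRing R] [Finite R] (n : ℕ) :
    Nat.card (SpecialLinearGroup (Fin n) R) ≤ Nat.card R ^ (n * n) := by
  rw [← card_matrix R n]
  exact Nat.card_le_card_of_injective _ Subtype.val_injective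

/-- Real-exponent form of a saving `C` in the squared fiber count. -/
theorem le_rpow_of_sq_mul_le {F C G Q ε : ℝ} {s n : ℕ} (hQ : 1 ≤ Q) (hG : 1 ≤ G)
    (hε : 0 ≤ ε) (hGQ : G ≤ Q ^ (n * n)) (hC : Q ^ (2 * ε * n ^ 2) ≤ C)
    (h : F ^ 2 * C ≤ G ^ (2 * s)) : F ≤ G ^ ((s : ℝ) - ε) := by
  have hG0 : 0 < G := by linarith
  have h1 : G ^ (2 * ε) ≤ C := by
    refine le_trans ?_ hC
    calc G ^ (2 * ε) ≤ (Q ^ (n * n)) ^ (2 * ε) :=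
          Real.rpow_le_rpow hG0.le hGQ (by positivity)
      _ = Q ^ (2 * ε * n ^ 2) := by
          rw [← Real.rpow_natCast, ← Real.rpow_mul (by linarith)]
          congr 1; push_cast; ring
  have h2 : F ^ 2 * G ^ (2 * ε) ≤ G ^ (2 * s) :=
    (mul_le_mul_of_nonneg_left h1 (sq_nonneg F)).trans h
  refine le_of_sq_le_sq ?_ (by positivity)
  have h3 : (G ^ ((s : ℝ) - ε)) ^ 2 * G ^ (2 * ε) = G ^ (2 * s) := by
    rw [← Real.rpow_natCast, ← Real.rpow_natCast, ← Real.rpow_mul hG0.le, ← Real.rpow_add hG0]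
    congr 1; push_cast; ring
  rw [← h3] at h2
  exact le_of_mul_le_mul_right h2 (by positivity)

/-- Arithmetic of the exponents when the rank is small compared with the word. -/
theorem small_exponent {n l k : ℕ} (hn : 2 ≤ n) (hl : 1 ≤ l) (hk : 1 ≤ k) (h : n < 1000 * l ^ 2) :
    (k : ℝ) * (2 * (1 / (2 * 10 ^ 17 * (l : ℝ) ^ 9)) * n ^ 2) ≤
      ((k - 1) / (2 * n * l + 1) + 1 : ℕ) := by
  have h1 : k ≤ ((k - 1) / (2 * n * l + 1) + 1) * (2 * n * l + 1) := by
    rw [add_mul, one_mul]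
    have := Nat.lt_div_mul_add (a := k - 1) (b := 2 * n * l + 1) (by omega)
    omega
  generalize (k - 1) / (2 * n * l + 1) + 1 = b at h1
  have h2 : n ^ 2 * (2 * n * l + 1) ≤ 10 ^ 17 * l ^ 9 := by
    have h3 : 2 * n * l + 1 ≤ 3 * n * l := by nlinarith
    calc n ^ 2 * (2 * n * l + 1) ≤ n ^ 2 * (3 * n * l) := Nat.mul_le_mul_left _ h3
      _ = 3 * n ^ 3 * l := by ring
      _ ≤ 3 * (1000 * l ^ 2) ^ 3 * l := by gcongr
      _ = 3 * 10 ^ 9 * l ^ 7 := by ring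
      _ ≤ 10 ^ 17 * l ^ 9 := by
          apply Nat.mul_le_mul (by norm_num)
          exact Nat.pow_le_pow_right hl (by norm_num)
  have h4 : k * n ^ 2 ≤ b * (10 ^ 17 * l ^ 9) := by
    calc k * n ^ 2 ≤ b * (2 * n * l + 1) * n ^ 2 := Nat.mul_le_mul_right _ h1
      _ = b * (n ^ 2 * (2 * n * l + 1)) := by ring
      _ ≤ _ := Nat.mul_le_mul_left _ h2
  have h5 : (k : ℝ) * n ^ 2 ≤ b * (10 ^ 17 * l ^ 9) := by exact_mod_cast h4
  have hl0 : (0 : ℝ) < l := by exact_mod_cast hl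
  have h6 : (k : ℝ) * (2 * (1 / (2 * 10 ^ 17 * (l : ℝ) ^ 9)) * n ^ 2) =
      (k * n ^ 2) / (10 ^ 17 * l ^ 9) := by field_simp
  rw [h6, div_le_iff₀ (by positivity)]
  exact h5

/-- Arithmetic of the exponents when the rank is large compared with the word. -/
theorem large_exponent {n l : ℕ} (hl : 1 ≤ l) (h : 1000 * l ^ 2 ≤ n) :
    ∃ m e : ℕ, e + (4 * l ^ 2 * m ^ 2 + 4 * l) ≤ n * m ∧
      2 * (1 / (2 * 10 ^ 17 * (l : ℝ) ^ 9)) * n ^ 2 ≤ e := by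
  have hl2 : l ≤ l ^ 2 := Nat.le_self_pow (by norm_num) l
  have hm1 : n / (8 * l ^ 2) * (8 * l ^ 2) ≤ n := Nat.div_mul_le_self _ _
  have hm2 : n < n / (8 * l ^ 2) * (8 * l ^ 2) + 8 * l ^ 2 :=
    Nat.lt_div_mul_add (by positivity)
  refine ⟨n / (8 * l ^ 2), n / (8 * l ^ 2) * (n / (8 * l ^ 2)), ?_, ?_⟩
  · generalize n / (8 * l ^ 2) = m at *
    have hm : 124 ≤ m := by
      by_contra! hm
      nlinarith [Nat.mul_le_mul_right (8 * l ^ 2) (Nat.le_of_lt_succ hm)]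
    have h1 : m * (8 * l ^ 2) * m ≤ n * m := Nat.mul_le_mul_right _ hm1
    have h2 : m * m ≤ l ^ 2 * (m * m) := Nat.le_mul_of_pos_left _ (by positivity)
    have h3 : 124 * 124 * l ^ 2 ≤ l ^ 2 * (m * m) := by nlinarith
    nlinarith
  · generalize n / (8 * l ^ 2) = m at *
    have hm : 1 ≤ m := by
      by_contra! hm
      have : m = 0 := by omega
      subst this
      nlinarith
    have h0 : n ≤ 16 * l ^ 2 * m := by nlinarith
    have h1 : n ^ 2 ≤ m * m * (10 ^ 17 * l ^ 9) := by
      calc n ^ 2 ≤ (16 * l ^ 2 * m) ^ 2 := Nat.pow_le_pow_left h0 2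
        _ = m * m * (256 * l ^ 4) := by ring
        _ ≤ m * m * (10 ^ 17 * l ^ 9) := by
            apply Nat.mul_le_mul_left
            exact Nat.mul_le_mul (by norm_num) (Nat.pow_le_pow_right hl (by norm_num))
    have h2 : (n : ℝ) ^ 2 ≤ (m * m) * (10 ^ 17 * l ^ 9) := by exact_mod_cast h1
    have hl0 : (0 : ℝ) < l := by exact_mod_cast hl
    have h6 : 2 * (1 / (2 * 10 ^ 17 * (l : ℝ) ^ 9)) * (n : ℝ) ^ 2 =
        (n ^ 2) / (10 ^ 17 * l ^ 9) := by field_simp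
    rw [h6, div_le_iff₀ (by positivity)]
    push_cast
    exact h2

/-- Integers prime to the residue characteristic are units. -/
theorem IsTruncated.isUnit_intCast {R : Type*} [CommRing R] {p q k : ℕ} (hp : p.Prime)
    (H : IsTruncated R (p : R) q k) {N : ℤ} (hN : ¬ (p : ℤ) ∣ N) : IsUnit (N : R) := by
  refine (H.isUnit_or_dvd (N : R)).resolve_right fun hd => ?_
  have hc : IsCoprime (p : ℤ) N :=
    (Nat.prime_iff_prime_int.mp hp).coprime_iff_not_dvd.mpr hN
  obtain ⟨a, b, hab⟩ := hc
  have h1 : (a : R) * (p : R) + b * (N : R) = 1 := by exact_mod_cast congrArg (Int.cast : ℤ → R) hab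
  have h2 : (p : R) ∣ 1 := h1 ▸ dvd_add (Dvd.intro_left _ rfl) (hd.mul_left _)
  exact H.not_isUnit (isUnit_of_dvd_one h2)

/-- The ring-theoretic core: the bound over any truncated valuation ring of residue
characteristic avoiding finitely many primes. -/
theorem card_fiber_le_rpow {R : Type*} [CommRing R] [IsPrincipalIdealRing R] {p q k : ℕ}
    (hp : p.Prime) (H : IsTruncated R (p : R) q k) {s n : ℕ} (hn : 2 ≤ n)
    {w : FreeGroup (Fin s)} (hw : w ≠ 1) (γ : Fin s → SpecialLinearGroup (Fin n) ℤ) (c d : Fin n)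
    (hγ : ¬ (p : ℤ) ∣ (FreeGroup.lift γ w).1 c d - (1 : Matrix (Fin n) (Fin n) ℤ) c d)
    (hq : 4 * (n + 1) ≤ q) (hq2 : (2 ^ (s + 1) * (2 * n * w.norm + 1)) ^ 2 ≤ q)
    (g : SpecialLinearGroup (Fin n) R) :
    (Nat.card {gs : Fin s → SpecialLinearGroup (Fin n) R // FreeGroup.lift gs w = g} : ℝ) ≤
      (Nat.card (SpecialLinearGroup (Fin n) R) : ℝ) ^
        ((s : ℝ) - 1 / (2 * 10 ^ 17 * (w.norm : ℝ) ^ 9)) := by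
  have := H.finite
  have := H.nontrivial
  have hl : 1 ≤ w.norm := Nat.one_le_iff_ne_zero.mpr fun h => hw (FreeGroup.norm_eq_zero.mp h)
  have hk := H.pos
  have hG1 : (1 : ℝ) ≤ Nat.card (SpecialLinearGroup (Fin n) R) := by
    exact_mod_cast Nat.card_pos
  have hQ1 : (1 : ℝ) ≤ Nat.card R := by exact_mod_cast Nat.card_pos
  have hGQ : (Nat.card (SpecialLinearGroup (Fin n) R) : ℝ) ≤ (Nat.card R : ℝ) ^ (n * n) := by
    exact_mod_cast card_sl_le n
  have i₀ : Fin n := ⟨0, by omega⟩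
  rcases lt_or_ge n (1000 * w.norm ^ 2) with hsmall | hlarge
  · let γR : Fin s → SpecialLinearGroup (Fin n) R :=
      fun i => SpecialLinearGroup.map (Int.castRingHom R) (γ i)
    have hlift : FreeGroup.lift γR w =
        SpecialLinearGroup.map (Int.castRingHom R) (FreeGroup.lift γ w) := by
      have : FreeGroup.lift γR =
          (SpecialLinearGroup.map (Int.castRingHom R)).comp (FreeGroup.lift γ) := by
        ext i; simp [γR]
      rw [this]; rfl
    have hentry : (FreeGroup.lift γR w).1 c d - (1 : Matrix (Fin n) (Fin n) R) c d =
        (((FreeGroup.lift γ w).1 c d - (1 : Matrix (Fin n) (Fin n) ℤ) c d : ℤ) : R) := by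
      rw [hlift]
      simp [Matrix.one_apply]
    have hu := H.isUnit_intCast hp hγ
    rw [← hentry] at hu
    have hmk : FreeGroup.mk w.toWord = w := FreeGroup.mk_toWord
    have h := card_fiber_sq_mul_le H i₀ w.toWord hq hq2 γR c d (by rw [hmk]; exact hu) g
    rw [hmk] at h
    refine le_rpow_of_sq_mul_le (n := n) hQ1 hG1 (by positivity) hGQ
      ?_ (C := (q : ℝ) ^ ((k - 1) / (2 * n * w.norm + 1) + 1)) (by exact_mod_cast h)
    have hq1 : (1 : ℝ) ≤ q := by exact_mod_cast (by have := H.two_le; omega : 1 ≤ q)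
    rw [H.card, Nat.cast_pow, ← Real.rpow_natCast (q : ℝ) k, ← Real.rpow_mul (by linarith),
      ← Real.rpow_natCast (q : ℝ) (_ + 1)]
    exact Real.rpow_le_rpow_of_exponent_le hq1 (small_exponent hn hl hk hsmall)
  · obtain ⟨m, e, he1, he2⟩ := large_exponent hl hlarge
    have hG : Nat.card R ^ (n * n) ≤ Nat.card (SpecialLinearGroup (Fin n) R) * Nat.card R ^ 2 := by
      refine (card_matrix_le H hq i₀).trans ?_
      have h1 : Nat.card Rˣ ≤ Nat.card R := Nat.card_le_card_of_injective _ Units.val_injective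
      have h2 : 2 ≤ Nat.card R := Finite.one_lt_card
      nlinarith [Nat.mul_le_mul h2 h1,
        Nat.zero_le (Nat.card (SpecialLinearGroup (Fin n) R))]
    have h := card_fiber_sq_le s m w hw hG g
    refine le_rpow_of_sq_mul_le (n := n) hQ1 hG1 (by positivity) hGQ
      ?_ (C := (Nat.card R : ℝ) ^ e) ?_
    · rw [← Real.rpow_natCast (Nat.card R : ℝ) e]
      exact Real.rpow_le_rpow_of_exponent_le hQ1 he2
    · have hpos : 0 < Nat.card R := Nat.card_pos
      have h3 : Nat.card {gs : Fin s → SpecialLinearGroup (Fin n) R // FreeGroup.lift gs w = g} ^ 2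
          * Nat.card R ^ e ≤ Nat.card (SpecialLinearGroup (Fin n) R) ^ (2 * s) := by
        refine Nat.le_of_mul_le_mul_right (le_trans ?_ h)
          (Nat.pow_pos (n := 4 * w.norm ^ 2 * m ^ 2 + 4 * w.norm) hpos)
        rw [mul_assoc, ← pow_add]
        exact Nat.mul_le_mul_left _ (Nat.pow_le_pow_right hpos he1)
      exact_mod_cast h3

end Assembly

end WordFiber

theorem sl_word_fiber_count_over_truncated_witt_vectors :
    ∀ (s : ℕ) (w : FreeGroup (Fin s)), w ≠ 1 →
    ∀ (n : ℕ), 2 ≤ n →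
    ∃ S : Finset ℕ,
      ∀ (p : ℕ) (hp : p.Prime), p ∉ S →
      ∀ (r k : ℕ), 1 ≤ r → 1 ≤ k →
      haveI : Fact p.Prime := ⟨hp⟩
      ∀ g : Matrix.SpecialLinearGroup (Fin n) (TruncatedWittVector p k (GaloisField p r)),
        (Nat.card {gs : Fin s →
            Matrix.SpecialLinearGroup (Fin n) (TruncatedWittVector p k (GaloisField p r)) //
            FreeGroup.lift gs w = g} : ℝ) ≤
          (Nat.card (Matrix.SpecialLinearGroup (Fin n)
              (TruncatedWittVector p k (GaloisField p r))) : ℝ) ^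
            ((s : ℝ) - 1 / (2 * 10 ^ 17 * (FreeGroup.norm w : ℝ) ^ 9)) := by
  intro s w hw n hn
  obtain ⟨γ, hγ⟩ := WordFiber.exists_int_tuple s n hn w.toWord
    (fun h => hw (FreeGroup.toWord_eq_nil_iff.mp h)) FreeGroup.isReduced_toWord
  rw [FreeGroup.mk_toWord] at hγ
  obtain ⟨c, d, hcd⟩ : ∃ c d : Fin n, (FreeGroup.lift γ w).1 c d ≠
      (1 : Matrix (Fin n) (Fin n) ℤ) c d := by
    by_contra! h
    exact hγ (Subtype.ext (Matrix.ext h))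
  set N : ℤ := (FreeGroup.lift γ w).1 c d - (1 : Matrix (Fin n) (Fin n) ℤ) c d with hN
  have hN0 : N ≠ 0 := sub_ne_zero.mpr hcd
  -- The excluded primes are the small ones and those dividing `N`.
  refine ⟨Finset.range (4 * (n + 1) + (2 ^ (s + 1) * (2 * n * w.norm + 1)) ^ 2) ∪
    N.natAbs.primeFactors, fun p hp hpS r k hr hk => ?_⟩
  have : Fact p.Prime := ⟨hp⟩
  intro g
  rw [Finset.mem_union, not_or, Finset.mem_range, not_lt] at hpS
  have hpq : p ≤ p ^ r := Nat.le_self_pow (by omega) p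
  have := WordFiber.isPrincipalIdealRing_witt p k r
  refine WordFiber.card_fiber_le_rpow hp (WordFiber.isTruncated_witt p k r hr hk) hn hw γ c d ?_
    (by omega) (by omega) g
  intro hd
  exact hpS.2 (Nat.mem_primeFactors.mpr
    ⟨hp, Int.natCast_dvd.mp hd, Int.natAbs_ne_zero.mpr hN0⟩)
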